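/- arXiv:1410.1168 — 3 statements merged into one kernel-verified Lean document; each statement's English description precedes it below -/
import Mathlib

section
/- Let φ and ψ be holomorphic self-maps of B_N, and suppose there exist ζ_1, ζ_2 ∈ ∂B_N and ω ∈ ∂B_N such that φ has restricted limit ω at ζ_1, ψ has restricted limit ω at ζ_2, and the angular derivatives A_φ(ζ_1) and A_ψ(ζ_2) exist. Then on H^2(B_N), and on A^2_s(B_N) for s > −1, one has lim_{r→1⁻} ⟨C_ψ* k_{rζ_2}, C_φ* k_{rζ_1}⟩ = ( 2/(d_φ(ζ_1) + d_ψ(ζ_2)) )^t > 0, where t = N for H^2(B_N) and t = N+s+1 for A^2_s(B_N). Equivalently, lim_{r→1⁻} ((1−r^2)/(1−⟨φ(rζ_1), ψ(rζ_2)⟩))^t = (2/(d_φ(ζ_1)+d_ψ(ζ_2)))^t. -/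
open Filter MeasureTheory Metric Set
open scoped ComplexInnerProductSpace Topology

noncomputable section

/-- Borel measurable structure on `ℂ^N`. -/
instance (N : ℕ) : MeasurableSpace (EuclideanSpace ℂ (Fin N)) := borel _

instance (N : ℕ) : BorelSpace (EuclideanSpace ℂ (Fin N)) := ⟨rfl⟩

/-- The open unit ball `B_N` of `ℂ^N`. -/
abbrev Ball (N : ℕ) : Set (EuclideanSpace ℂ (Fin N)) := Metric.ball 0 1

/-- An abstract presentation of a reproducing-kernel Hilbert space of holomorphic functions on
the unit ball `B_N` with reproducing kernel `K_w(z) = (1 - ⟨z,w⟩)^{-t}`.  For `t = N` this is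
the Hardy space `H²(B_N)`; for `t = N + s + 1` (`s > -1`) it is the weighted Bergman space
`A²_s(B_N)`.  Injectivity of evaluation forces the kernels to be total, so such a structure
determines the space uniquely up to canonical unitary equivalence. -/
structure BallKernelSpace (N : ℕ) (t : ℝ) where
  (H : Type)
  [grp : NormedAddCommGroup H]
  [ips : InnerProductSpace ℂ H]
  [cpl : CompleteSpace H]
  eval : H → EuclideanSpace ℂ (Fin N) → ℂ
  eval_add : ∀ f g : H, ∀ z, eval (f + g) z = eval f z + eval g z
  eval_smul : ∀ (c : ℂ) (f : H) (z : EuclideanSpace ℂ (Fin N)), eval (c • f) z = c * eval f z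
  holo : ∀ f : H, DifferentiableOn ℂ (eval f) (Ball N)
  eval_injective : ∀ f g : H, (∀ z ∈ Ball N, eval f z = eval g z) → f = g
  kernel : EuclideanSpace ℂ (Fin N) → H
  eval_kernel : ∀ w ∈ Ball N, ∀ z ∈ Ball N, eval (kernel w) z = (1 - ⟪w, z⟫) ^ (-(t : ℂ))
  reproducing : ∀ (f : H), ∀ w ∈ Ball N, ⟪kernel w, f⟫ = eval f w

attribute [instance] BallKernelSpace.grp BallKernelSpace.ips BallKernelSpace.cpl

/-- `T` is the composition operator `C_φ : f ↦ f ∘ φ` on `S`. -/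
def BallKernelSpace.IsCompositionOperator {N : ℕ} {t : ℝ} (S : BallKernelSpace N t)
    (φ : EuclideanSpace ℂ (Fin N) → EuclideanSpace ℂ (Fin N)) (T : S.H →L[ℂ] S.H) : Prop :=
  ∀ f : S.H, ∀ z ∈ Ball N, S.eval (T f) z = S.eval f (φ z)

/-- A restricted `ζ`-curve in the ball: a continuous curve `γ : [0,1) → B_N` with
`γ(t) → ζ` as `t → 1⁻`, which approaches `ζ` non-tangentially in the complex-normal
direction and whose orthogonal part tends to `ζ` faster, in the sense of Rudin. -/
def IsRestrictedCurve {N : ℕ} (ζ : EuclideanSpace ℂ (Fin N)) (γ : ℝ → EuclideanSpace ℂ (Fin N)) :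
    Prop :=
  (∀ t ∈ Set.Ico (0 : ℝ) 1, γ t ∈ Ball N) ∧
  ContinuousOn γ (Set.Ico (0 : ℝ) 1) ∧
  Tendsto γ (𝓝[Set.Ico (0 : ℝ) 1] 1) (𝓝 ζ) ∧
  Tendsto (fun t => ‖γ t - ⟪ζ, γ t⟫ • ζ‖ ^ 2 / (1 - ‖(⟪ζ, γ t⟫ : ℂ)‖ ^ 2))
    (𝓝[Set.Ico (0 : ℝ) 1] 1) (𝓝 0) ∧
  ∃ M : ℝ, ∀ t ∈ Set.Ico (0 : ℝ) 1, ‖ζ - ⟪ζ, γ t⟫ • ζ‖ / (1 - ‖(⟪ζ, γ t⟫ : ℂ)‖) ≤ M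

/-- `f` has restricted limit (`R-lim`) `L` at the boundary point `ζ`: `f(γ(t)) → L` as
`t → 1⁻` along every restricted `ζ`-curve `γ`. -/
def HasRestrictedLimit {N : ℕ} {α : Type*} [TopologicalSpace α]
    (f : EuclideanSpace ℂ (Fin N) → α) (ζ : EuclideanSpace ℂ (Fin N)) (L : α) : Prop :=
  ∀ γ : ℝ → EuclideanSpace ℂ (Fin N), IsRestrictedCurve ζ γ →
    Tendsto (f ∘ γ) (𝓝[Set.Ico (0 : ℝ) 1] 1) (𝓝 L)

/-- The boundary dilation quantity `d_φ(ζ) = liminf_{z → ζ} (1 - |φ(z)|)/(1 - |z|)`. -/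
def boundaryDilation {N : ℕ} (φ : EuclideanSpace ℂ (Fin N) → EuclideanSpace ℂ (Fin N))
    (ζ : EuclideanSpace ℂ (Fin N)) : ℝ :=
  Filter.liminf (fun z => (1 - ‖φ z‖) / (1 - ‖z‖)) (𝓝[Ball N] ζ)

section SP
variable {E F : Type*} [NormedAddCommGroup E] [InnerProductSpace ℂ E]
  [NormedAddCommGroup F] [InnerProductSpace ℂ F]

/-- The ball automorphism exchanging `b` and `0`. -/
def mob (b x : E) : E :=
  (1 - ⟪b, x⟫)⁻¹ • ((1 - ⟪b, x⟫ / (1 + (Real.sqrt (1 - ‖b‖ ^ 2) : ℂ))) • b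
    - (Real.sqrt (1 - ‖b‖ ^ 2) : ℂ) • x)

lemma one_sub_re_pos {b x : E} (hb : ‖b‖ < 1) (hx : ‖x‖ ≤ 1) : 0 < (1 - ⟪b, x⟫).re := by
  have h1 := Complex.re_le_norm ⟪b, x⟫
  have h2 : ‖(⟪b, x⟫ : ℂ)‖ ≤ ‖b‖ * ‖x‖ := norm_inner_le_norm b x
  have h3 : ‖b‖ * ‖x‖ ≤ ‖b‖ := mul_le_of_le_one_right (norm_nonneg _) hx
  simp only [Complex.sub_re, Complex.one_re]
  linarith

lemma one_sub_ne {b x : E} (hb : ‖b‖ < 1) (hx : ‖x‖ ≤ 1) : (1 - ⟪b, x⟫ : ℂ) ≠ 0 := by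
  intro h
  have := one_sub_re_pos hb hx
  rw [h] at this
  simp at this

lemma mob_norm {b x : E} (hb : ‖b‖ < 1) (hx : ‖x‖ < 1) :
    (1 - ‖mob b x‖ ^ 2) * ‖1 - ⟪b, x⟫‖ ^ 2 = (1 - ‖b‖ ^ 2) * (1 - ‖x‖ ^ 2) := by
  have hne := one_sub_ne hb hx.le
  have hb2 : 0 ≤ 1 - ‖b‖ ^ 2 := by nlinarith [norm_nonneg b]
  obtain ⟨s, hs, hs0⟩ : ∃ s, Real.sqrt (1 - ‖b‖ ^ 2) = s ∧ 0 ≤ s := ⟨_, rfl, Real.sqrt_nonneg _⟩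
  have hs2 : s ^ 2 = 1 - ‖b‖ ^ 2 := by rw [← hs, Real.sq_sqrt hb2]
  have hn : ‖(1 - ⟪b, x⟫ : ℂ)‖ ≠ 0 := norm_ne_zero_iff.mpr hne
  unfold mob
  rw [hs, norm_smul, norm_inv, mul_pow, inv_pow, sub_mul, mul_right_comm,
    inv_mul_cancel₀ (pow_ne_zero 2 hn), one_mul, one_mul, norm_sub_sq (𝕜 := ℂ) (E := E)]
  rw [norm_smul, norm_smul, inner_smul_left, inner_smul_right, mul_pow, mul_pow]
  generalize (⟪b, x⟫ : ℂ) = q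
  have hc : (1 - q / (1 + (s : ℂ))) = 1 - ((1 + s)⁻¹ : ℝ) * q := by
    push_cast; rw [div_eq_inv_mul]
  have hm : ((1 + s)⁻¹ : ℝ) * (1 + s) = 1 := inv_mul_cancel₀ (by positivity)
  rw [hc]
  generalize ((1 + s)⁻¹ : ℝ) = m at hm
  rw [Complex.sq_norm, Complex.sq_norm, Complex.sq_norm, Complex.normSq_apply,
    Complex.normSq_apply, Complex.normSq_apply]
  have hb' : ‖b‖ ^ 2 = 1 - s ^ 2 := by linarith
  rw [hb']
  simp
  have hms : m * s = 1 - m := by linarith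
  generalize q.re = u
  generalize q.im = v
  have h3 : m ^ 2 * (1 - s ^ 2) = 2 * m - 1 := by linear_combination (-m * s - 1 + m) * hms
  have h4 : m * (1 - s ^ 2) = 1 - s := by linear_combination (1 - s) * hm
  linear_combination (- (u ^ 2 + v ^ 2)) * h3 + 2 * u * h4 + (-2 * (u ^ 2 + v ^ 2)) * hms

lemma mob_mem {b x : E} (hb : ‖b‖ < 1) (hx : ‖x‖ < 1) : ‖mob b x‖ < 1 := by
  have h := mob_norm hb hx
  have hn : 0 < ‖(1 - ⟪b, x⟫ : ℂ)‖ ^ 2 := by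
    have := norm_pos_iff.mpr (one_sub_ne hb hx.le); positivity
  have : 0 < (1 - ‖b‖ ^ 2) * (1 - ‖x‖ ^ 2) := by
    apply mul_pos <;> nlinarith [norm_nonneg b, norm_nonneg x]
  rw [← h] at this
  have := (pos_iff_pos_of_mul_pos this).mpr hn
  nlinarith [norm_nonneg (mob b x)]

lemma mob_self {b : E} (hb : ‖b‖ < 1) : mob b b = 0 := by
  have hb2 : 0 ≤ 1 - ‖b‖ ^ 2 := by nlinarith [norm_nonneg b]
  have h0 := mob_norm hb hb
  rw [inner_self_eq_norm_sq_to_K] at h0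
  have h1 : ‖(1 - ((‖b‖ : ℂ)) ^ 2)‖ = 1 - ‖b‖ ^ 2 := by
    rw [show (1 - (‖b‖ : ℂ) ^ 2) = ((1 - ‖b‖ ^ 2 : ℝ) : ℂ) by push_cast; rfl, Complex.norm_real,
      Real.norm_of_nonneg hb2]
  have h2 : 0 < 1 - ‖b‖ ^ 2 := by nlinarith [norm_nonneg b]
  simp only [Complex.coe_algebraMap] at h0
  rw [h1] at h0
  have h3 : ‖mob b b‖ ^ 2 * (1 - ‖b‖ ^ 2) ^ 2 = 0 := by linarith
  have h4 : ‖mob b b‖ ^ 2 = 0 := by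
    rcases mul_eq_zero.mp h3 with h | h
    · exact h
    · exact absurd h (by positivity)
  simpa using h4

lemma mob_zero {b : E} : mob b 0 = b := by simp [mob]

lemma mob_mob {b x : E} (hb : ‖b‖ < 1) (hx : ‖x‖ < 1) : mob b (mob b x) = x := by
  have hne := one_sub_ne hb hx.le
  have hb2 : 0 < 1 - ‖b‖ ^ 2 := by nlinarith [norm_nonneg b]
  obtain ⟨s, hs, hs0⟩ : ∃ s, Real.sqrt (1 - ‖b‖ ^ 2) = s ∧ 0 < s := ⟨_, rfl, Real.sqrt_pos.mpr hb2⟩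
  have hs2 : s ^ 2 = 1 - ‖b‖ ^ 2 := by rw [← hs, Real.sq_sqrt hb2.le]
  have hb' : ((‖b‖ : ℂ)) ^ 2 = 1 - (s : ℂ) ^ 2 := by
    have : ‖b‖ ^ 2 = 1 - s ^ 2 := by linarith
    exact_mod_cast this
  have hs1 : (1 + (s : ℂ)) ≠ 0 := by
    have : (1 + s : ℝ) ≠ 0 := by positivity
    exact_mod_cast this
  have hsne : (s : ℂ) ≠ 0 := by exact_mod_cast hs0.ne'
  have hin : (⟪b, mob b x⟫ : ℂ) = (1 - (s : ℂ) ^ 2 - ⟪b, x⟫) / (1 - ⟪b, x⟫) := by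
    unfold mob
    rw [hs, inner_smul_right, inner_sub_right, inner_smul_right, inner_smul_right,
      inner_self_eq_norm_sq_to_K]
    simp only [Complex.coe_algebraMap]
    rw [hb']
    field_simp
    ring
  have e1 : mob b (mob b x) = (1 - ⟪b, mob b x⟫)⁻¹ • ((1 - ⟪b, mob b x⟫ / (1 + (s : ℂ))) • b
    - (s : ℂ) • mob b x) := by rw [← hs]; rfl
  rw [e1, hin]
  have e2 : mob b x = (1 - ⟪b, x⟫)⁻¹ • ((1 - ⟪b, x⟫ / (1 + (s : ℂ))) • b
    - (s : ℂ) • x) := by rw [← hs]; rfl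
  rw [e2]
  generalize (⟪b, x⟫ : ℂ) = q at *
  have h1 : (1 - (1 - (s : ℂ) ^ 2 - q) / (1 - q)) = s ^ 2 / (1 - q) := by
    field_simp; ring
  rw [h1]
  match_scalars
  · field_simp
    ring
  · field_simp

lemma mob_diff {b : E} (hb : ‖b‖ < 1) : DifferentiableOn ℂ (mob b) (ball 0 1) := by
  intro x hx
  have hne := one_sub_ne hb (mem_ball_zero_iff.mp hx).le
  have hi : Differentiable ℂ (fun x : E => (⟪b, x⟫ : ℂ)) := (innerSL ℂ b).differentiable
  unfold mob
  apply DifferentiableAt.differentiableWithinAt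
  apply DifferentiableAt.smul
  · exact ((differentiableAt_const _).sub hi.differentiableAt).inv hne
  · have : DifferentiableAt ℂ (fun x : E => (⟪b, x⟫ : ℂ)) x := hi.differentiableAt
    fun_prop

/-- Schwarz–Pick in the ball. -/
lemma schwarz_pick {φ : E → F} (hφ : DifferentiableOn ℂ φ (ball 0 1))
    (hm : MapsTo φ (ball 0 1) (ball 0 1)) {z w : E} (hz : ‖z‖ < 1) (hw : ‖w‖ < 1) :
    (1 - ‖z‖ ^ 2) * (1 - ‖w‖ ^ 2) * ‖1 - ⟪φ w, φ z⟫‖ ^ 2 ≤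
      (1 - ‖φ z‖ ^ 2) * (1 - ‖φ w‖ ^ 2) * ‖1 - ⟪w, z⟫‖ ^ 2 := by
  have hb : ∀ x : E, ‖x‖ < 1 → ‖φ x‖ < 1 := fun x hx =>
    mem_ball_zero_iff.mp (hm (mem_ball_zero_iff.mpr hx))
  have hm1 : MapsTo (mob w) (ball 0 1) (ball 0 1) := fun x hx =>
    mem_ball_zero_iff.mpr (mob_mem hw (mem_ball_zero_iff.mp hx))
  have hm2 : MapsTo (mob (φ w)) (ball 0 1) (ball 0 1) := fun x hx =>
    mem_ball_zero_iff.mpr (mob_mem (hb w hw) (mem_ball_zero_iff.mp hx))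
  have key := Complex.norm_le_norm_of_mapsTo_ball (f := mob (φ w) ∘ φ ∘ mob w) (R := 1)
    (z := mob w z)
    ((mob_diff (hb w hw)).comp (hφ.comp (mob_diff hw) hm1) (hm.comp hm1))
    (fun x hx => ball_subset_closedBall (hm2 (hm (hm1 hx))))
    (by simp [mob_zero, mob_self (hb w hw)]) (mob_mem hw hz)
  simp only [Function.comp, mob_mob hw hz] at key
  have h1 := mob_norm hw hz
  have h2 := mob_norm (hb w hw) (hb z hz)
  have h3 : 1 - ‖mob w z‖ ^ 2 ≤ 1 - ‖mob (φ w) (φ z)‖ ^ 2 := by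
    have := norm_nonneg (mob (φ w) (φ z)); nlinarith
  calc _ = (1 - ‖mob w z‖ ^ 2) * (‖1 - ⟪w, z⟫‖ ^ 2 * ‖1 - ⟪φ w, φ z⟫‖ ^ 2) := by
        rw [← mul_assoc, h1]; ring
    _ ≤ (1 - ‖mob (φ w) (φ z)‖ ^ 2) * (‖1 - ⟪w, z⟫‖ ^ 2 * ‖1 - ⟪φ w, φ z⟫‖ ^ 2) := by gcongr
    _ = ((1 - ‖mob (φ w) (φ z)‖ ^ 2) * ‖1 - ⟪φ w, φ z⟫‖ ^ 2) * ‖1 - ⟪w, z⟫‖ ^ 2 := by ring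
    _ = _ := by rw [h2]; ring
end SP

lemma radial_inner {E : Type*} [NormedAddCommGroup E] [InnerProductSpace ℂ E]
    {ζ : E} (hζ : ‖ζ‖ = 1) (r : ℝ) :
    (⟪ζ, r • ζ⟫ : ℂ) = r := by
  rw [RCLike.real_smul_eq_coe_smul (K := ℂ), inner_smul_right, inner_self_eq_norm_sq_to_K, hζ]
  simp

lemma ev_lt_one : ∀ᶠ r : ℝ in 𝓝[<] 1, 0 < r ∧ r < 1 :=
  Ioo_mem_nhdsLT (by norm_num)

lemma radial_norm {E : Type*} [NormedAddCommGroup E] [InnerProductSpace ℂ E]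
    {ζ : E} (hζ : ‖ζ‖ = 1) {r : ℝ} (hr : 0 < r ∧ r < 1) : ‖r • ζ‖ = r := by
  rw [norm_smul, hζ, Real.norm_of_nonneg hr.1.le, mul_one]

lemma radial_tendsto {N : ℕ} {ζ : EuclideanSpace ℂ (Fin N)} (hζ : ‖ζ‖ = 1) :
    Tendsto (fun r : ℝ => r • ζ) (𝓝[<] 1) (𝓝[Ball N] ζ) := by
  apply tendsto_nhdsWithin_iff.mpr
  constructor
  · have : Tendsto (fun r : ℝ => r • ζ) (𝓝 1) (𝓝 ((1 : ℝ) • ζ)) :=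
      (continuous_id.smul continuous_const).tendsto 1
    rw [one_smul] at this
    exact this.mono_left nhdsWithin_le_nhds
  · filter_upwards [ev_lt_one] with r hr
    rw [mem_ball_zero_iff, radial_norm hζ hr]
    exact hr.2

lemma radial_restricted {N : ℕ} {ζ : EuclideanSpace ℂ (Fin N)} (hζ : ‖ζ‖ = 1) :
    IsRestrictedCurve ζ (fun r : ℝ => r • ζ) := by
  have hz : ∀ r : ℝ, r • ζ - (⟪ζ, r • ζ⟫ : ℂ) • ζ = 0 := by
    intro r
    rw [radial_inner hζ, RCLike.real_smul_eq_coe_smul (K := ℂ)]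
    simp
  refine ⟨?_, ?_, ?_, ?_, 1, ?_⟩
  · intro r hr
    rw [mem_ball_zero_iff, norm_smul, hζ, Real.norm_of_nonneg hr.1, mul_one]
    exact hr.2
  · exact (continuous_id.smul continuous_const).continuousOn
  · have : Tendsto (fun r : ℝ => r • ζ) (𝓝 1) (𝓝 ((1 : ℝ) • ζ)) :=
      (continuous_id.smul continuous_const).tendsto 1
    rw [one_smul] at this
    exact this.mono_left nhdsWithin_le_nhds
  · simp only [hz]
    simp
  · intro r hr
    rw [radial_inner hζ]
    have : ζ - (r : ℂ) • ζ = ((1 - r : ℝ) : ℂ) • ζ := by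
      push_cast; rw [sub_smul, one_smul]
    rw [this, norm_smul, hζ, Complex.norm_real, Complex.norm_real,
      Real.norm_of_nonneg hr.1, Real.norm_of_nonneg (by linarith [hr.2]), mul_one]
    exact div_self_le_one _

lemma restricted_radial {N : ℕ} {α : Type*} [TopologicalSpace α]
    {f : EuclideanSpace ℂ (Fin N) → α} {ζ : EuclideanSpace ℂ (Fin N)} {L : α} (hζ : ‖ζ‖ = 1)
    (h : HasRestrictedLimit f ζ L) : Tendsto (fun r : ℝ => f (r • ζ)) (𝓝[<] 1) (𝓝 L) := by
  have := h _ (radial_restricted hζ)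
  rw [nhdsWithin_Ico_eq_nhdsLT (by norm_num)] at this
  exact this

lemma eq_of_inner_one {E : Type*} [NormedAddCommGroup E] [InnerProductSpace ℂ E]
    {η ω : E} (hη : ‖η‖ ≤ 1) (hω : ‖ω‖ = 1) (h : (⟪η, ω⟫ : ℂ) = 1) : η = ω := by
  have h1 := norm_sub_sq (𝕜 := ℂ) η ω
  rw [h, hω] at h1
  simp at h1
  have h2 : ‖η - ω‖ ^ 2 ≤ 0 := by nlinarith [norm_nonneg η]
  have h3 : ‖η - ω‖ = 0 := by
    have := norm_nonneg (η - ω); nlinarith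
  exact sub_eq_zero.mp (norm_eq_zero.mp h3)

/-- Julia's inequality along the radius. -/
lemma julia {N : ℕ} {φ : EuclideanSpace ℂ (Fin N) → EuclideanSpace ℂ (Fin N)}
    (hφ : DifferentiableOn ℂ φ (Ball N)) (hφm : Set.MapsTo φ (Ball N) (Ball N))
    {ζ ω : EuclideanSpace ℂ (Fin N)} (hζ : ‖ζ‖ = 1) (hω : ‖ω‖ = 1)
    (h1 : Tendsto (fun r : ℝ => φ (r • ζ)) (𝓝[<] 1) (𝓝 ω)) {D : ℝ} (hD0 : 0 ≤ D)
    (hD : ∃ᶠ z in 𝓝[Ball N] ζ, (1 - ‖φ z‖) / (1 - ‖z‖) < D) {r : ℝ} (hr : 0 < r ∧ r < 1) :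
    (1 + r) * ‖1 - ⟪ω, φ (r • ζ)⟫‖ ^ 2 ≤ (1 - ‖φ (r • ζ)‖ ^ 2) * D * (1 - r) := by
  have hb : ∀ x, ‖x‖ < 1 → ‖φ x‖ < 1 := fun x hx =>
    mem_ball_zero_iff.mp (hφm (mem_ball_zero_iff.mpr hx))
  have hne : (𝓝[Ball N] ζ ⊓ 𝓟 {z | (1 - ‖φ z‖) / (1 - ‖z‖) < D}).NeBot := by
    rw [← frequently_mem_iff_neBot]; exact hD
  obtain ⟨U, hU⟩ := Ultrafilter.exists_le (𝓝[Ball N] ζ ⊓ 𝓟 {z | (1 - ‖φ z‖) / (1 - ‖z‖) < D})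
  have hUζ : Tendsto id (U : Filter (EuclideanSpace ℂ (Fin N))) (𝓝 ζ) :=
    hU.trans (inf_le_left.trans nhdsWithin_le_nhds)
  have hUb : ∀ᶠ z in (U : Filter (EuclideanSpace ℂ (Fin N))), z ∈ Ball N :=
    (hU.trans inf_le_left) self_mem_nhdsWithin
  have hUD : ∀ᶠ z in (U : Filter (EuclideanSpace ℂ (Fin N))), (1 - ‖φ z‖) / (1 - ‖z‖) < D :=
    (hU.trans inf_le_right) (mem_principal_self _)
  obtain ⟨η, hη, hηU⟩ := (isCompact_closedBall (0 : EuclideanSpace ℂ (Fin N)) 1).ultrafilter_le_nhds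
    (U.map φ) (by
      rw [le_principal_iff]
      exact hUb.mono fun z hz => ball_subset_closedBall (hφm hz))
  have hηt : Tendsto φ U (𝓝 η) := hηU
  have hη1 : ‖η‖ ≤ 1 := mem_closedBall_zero_iff.mp hη
  have main : ∀ r : ℝ, 0 < r ∧ r < 1 →
      (1 + r) * ‖1 - ⟪η, φ (r • ζ)⟫‖ ^ 2 ≤ (1 - ‖φ (r • ζ)‖ ^ 2) * D * (1 - r) := by
    intro r hr
    have hn := radial_norm hζ hr
    have hn1 : ‖r • ζ‖ < 1 := by rw [hn]; exact hr.2
    have ev : ∀ᶠ w in (U : Filter (EuclideanSpace ℂ (Fin N))),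
        (1 - r ^ 2) * (1 + ‖w‖) * ‖1 - ⟪φ w, φ (r • ζ)⟫‖ ^ 2 ≤
          (1 - ‖φ (r • ζ)‖ ^ 2) * (2 * D) * ‖1 - ⟪w, r • ζ⟫‖ ^ 2 := by
      filter_upwards [hUb, hUD] with w hw hwD
      have hw1 : ‖w‖ < 1 := mem_ball_zero_iff.mp hw
      have sp := schwarz_pick hφ hφm hn1 hw1
      rw [hn] at sp
      have hp : 0 < 1 - ‖w‖ := by linarith
      rw [div_lt_iff₀ hp] at hwD
      have hφw := hb w hw1
      have hφz := hb _ hn1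
      have hA : 0 ≤ (1 - ‖φ (r • ζ)‖ ^ 2) := by nlinarith [norm_nonneg (φ (r • ζ))]
      have h2 : 1 - ‖φ w‖ ^ 2 ≤ 2 * D * (1 - ‖w‖) := by nlinarith [norm_nonneg (φ w)]
      have h3 : (1 - ‖φ (r • ζ)‖ ^ 2) * (1 - ‖φ w‖ ^ 2) * ‖1 - ⟪w, r • ζ⟫‖ ^ 2 ≤
          (1 - ‖φ (r • ζ)‖ ^ 2) * (2 * D * (1 - ‖w‖)) * ‖1 - ⟪w, r • ζ⟫‖ ^ 2 := by gcongr
      refine le_of_mul_le_mul_right ?_ hp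
      linarith
    have hin : Tendsto (fun w => ‖1 - (⟪w, r • ζ⟫ : ℂ)‖ ^ 2)
        (U : Filter (EuclideanSpace ℂ (Fin N))) (𝓝 (‖1 - (⟪ζ, r • ζ⟫ : ℂ)‖ ^ 2)) :=
      ((tendsto_const_nhds.sub (hUζ.inner tendsto_const_nhds)).norm).pow 2
    have hin2 : Tendsto (fun w => ‖1 - (⟪φ w, φ (r • ζ)⟫ : ℂ)‖ ^ 2)
        (U : Filter (EuclideanSpace ℂ (Fin N))) (𝓝 (‖1 - (⟪η, φ (r • ζ)⟫ : ℂ)‖ ^ 2)) :=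
      ((tendsto_const_nhds.sub (hηt.inner tendsto_const_nhds)).norm).pow 2
    have hin3 : Tendsto (fun w => (1 - r ^ 2) * (1 + ‖w‖))
        (U : Filter (EuclideanSpace ℂ (Fin N))) (𝓝 ((1 - r ^ 2) * (1 + ‖ζ‖))) :=
      tendsto_const_nhds.mul (tendsto_const_nhds.add hUζ.norm)
    have lim := le_of_tendsto_of_tendsto (hin3.mul hin2) (tendsto_const_nhds.mul hin) ev
    rw [radial_inner hζ, hζ, show (1 - (r : ℂ)) = ((1 - r : ℝ) : ℂ) by push_cast; rfl,
      Complex.norm_real, Real.norm_of_nonneg (by linarith [hr.2])] at lim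
    have hp : 0 < 2 * (1 - r) := by linarith [hr.2]
    refine le_of_mul_le_mul_right ?_ hp
    linarith
  have hηω : η = ω := by
    apply eq_of_inner_one hη1 hω
    have hr1 : Tendsto (fun r : ℝ => r) (𝓝[<] 1) (𝓝 1) := tendsto_id.mono_left nhdsWithin_le_nhds
    have hL : Tendsto (fun r : ℝ => (1 + r) * ‖1 - (⟪η, φ (r • ζ)⟫ : ℂ)‖ ^ 2) (𝓝[<] 1)
        (𝓝 ((1 + 1) * ‖1 - (⟪η, ω⟫ : ℂ)‖ ^ 2)) :=
      (tendsto_const_nhds.add hr1).mul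
        (((tendsto_const_nhds.sub (tendsto_const_nhds.inner h1)).norm).pow 2)
    have hR : Tendsto (fun r : ℝ => (1 - ‖φ (r • ζ)‖ ^ 2) * D * (1 - r)) (𝓝[<] 1)
        (𝓝 ((1 - ‖ω‖ ^ 2) * D * (1 - 1))) :=
      ((tendsto_const_nhds.sub (h1.norm.pow 2)).mul tendsto_const_nhds).mul
        (tendsto_const_nhds.sub hr1)
    have lim := le_of_tendsto_of_tendsto hL hR (ev_lt_one.mono main)
    have h0 : ‖1 - (⟪η, ω⟫ : ℂ)‖ = 0 := by
      have := norm_nonneg (1 - (⟪η, ω⟫ : ℂ)); nlinarith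
    exact (sub_eq_zero.mp (norm_eq_zero.mp h0)).symm
  rw [← hηω]
  exact main r hr

/-- Julia–Carathéodory, radial part. -/
lemma julia_carath {N : ℕ} {φ : EuclideanSpace ℂ (Fin N) → EuclideanSpace ℂ (Fin N)}
    (hφ : DifferentiableOn ℂ φ (Ball N)) (hφm : Set.MapsTo φ (Ball N) (Ball N))
    {ζ ω : EuclideanSpace ℂ (Fin N)} (hζ : ‖ζ‖ = 1) (hω : ‖ω‖ = 1)
    (hR : HasRestrictedLimit φ ζ ω)
    (hA : ∃ A : ℂ, HasRestrictedLimit (fun z => (1 - ⟪ω, φ z⟫) / (1 - ⟪ζ, z⟫)) ζ A) :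
    0 < boundaryDilation φ ζ ∧
    Tendsto (fun r : ℝ => (1 - ⟪ω, φ (r • ζ)⟫) / (1 - (r : ℂ))) (𝓝[<] 1)
      (𝓝 (boundaryDilation φ ζ : ℂ)) ∧
    Tendsto (fun r : ℝ => ‖φ (r • ζ) - ω‖ ^ 2 / (1 - r)) (𝓝[<] 1) (𝓝 0) := by
  have hb : ∀ x, ‖x‖ < 1 → ‖φ x‖ < 1 := fun x hx =>
    mem_ball_zero_iff.mp (hφm (mem_ball_zero_iff.mpr hx))
  have hr1 : Tendsto (fun r : ℝ => r) (𝓝[<] 1) (𝓝 1) := tendsto_id.mono_left nhdsWithin_le_nhds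
  have h1 := restricted_radial hζ hR
  obtain ⟨A, hA⟩ := hA
  have hA := restricted_radial hζ hA
  simp only [radial_inner hζ] at hA
  set d := boundaryDilation φ ζ with hd
  have hnorm : ∀ r : ℝ, 0 < r ∧ r < 1 → ‖1 - (r : ℂ)‖ = 1 - r := by
    intro r hr
    rw [show (1 - (r : ℂ)) = ((1 - r : ℝ) : ℂ) by push_cast; rfl,
      Complex.norm_real, Real.norm_of_nonneg (by linarith [hr.2])]
  -- real part and norm
  have hre : Tendsto (fun r : ℝ => (1 - ⟪ω, φ (r • ζ)⟫ : ℂ).re / (1 - r)) (𝓝[<] 1) (𝓝 A.re) := by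
    refine ((Complex.continuous_re.tendsto A).comp hA).congr fun r => ?_
    simp only [Function.comp]
    rw [show (1 - (r : ℂ)) = ((1 - r : ℝ) : ℂ) by push_cast; rfl, Complex.div_ofReal_re]
  have hnm : Tendsto (fun r : ℝ => ‖(1 - ⟪ω, φ (r • ζ)⟫ : ℂ)‖ / (1 - r)) (𝓝[<] 1) (𝓝 ‖A‖) := by
    refine hA.norm.congr' ?_
    filter_upwards [ev_lt_one] with r hr
    rw [norm_div, hnorm r hr]
  have hle : ∀ r : ℝ, 0 < r ∧ r < 1 → 1 - ‖φ (r • ζ)‖ ≤ (1 - ⟪ω, φ (r • ζ)⟫ : ℂ).re := by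
    intro r hr
    have h1 := Complex.re_le_norm ⟪ω, φ (r • ζ)⟫
    have h2 : ‖(⟪ω, φ (r • ζ)⟫ : ℂ)‖ ≤ ‖ω‖ * ‖φ (r • ζ)‖ := norm_inner_le_norm _ _
    rw [hω, one_mul] at h2
    simp only [Complex.sub_re, Complex.one_re]
    linarith
  -- liminf bounds
  have hbdd : IsBoundedUnder (· ≥ ·) (𝓝[Ball N] ζ) (fun z => (1 - ‖φ z‖) / (1 - ‖z‖)) := by
    refine isBoundedUnder_of_eventually_ge (a := 0) ?_
    filter_upwards [self_mem_nhdsWithin] with z hz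
    have hz1 : ‖z‖ < 1 := mem_ball_zero_iff.mp hz
    have := hb z hz1
    exact div_nonneg (by linarith) (by linarith)
  have hcob : IsCoboundedUnder (· ≥ ·) (𝓝[Ball N] ζ) (fun z => (1 - ‖φ z‖) / (1 - ‖z‖)) := by
    refine IsCoboundedUnder.of_frequently_le (a := A.re + 1) ?_
    refine (radial_tendsto hζ).frequently (Eventually.frequently ?_)
    filter_upwards [ev_lt_one, hre.eventually_lt_const (lt_add_one _)] with r hr hlt
    rw [radial_norm hζ hr]
    refine le_trans ?_ hlt.le
    have : 0 < 1 - r := by linarith [hr.2]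
    have := hle r hr
    gcongr
  have hlow : ∀ c < d, ∀ᶠ r : ℝ in 𝓝[<] 1, c < (1 - ‖φ (r • ζ)‖) / (1 - r) := by
    intro c hc
    have := (radial_tendsto hζ).eventually (eventually_lt_of_lt_liminf hc hbdd)
    filter_upwards [this, ev_lt_one] with r h hr
    rwa [radial_norm hζ hr] at h
  have hlere : ∀ᶠ r : ℝ in 𝓝[<] 1, (1 - ‖φ (r • ζ)‖) / (1 - r) ≤
      (1 - ⟪ω, φ (r • ζ)⟫ : ℂ).re / (1 - r) := by
    filter_upwards [ev_lt_one] with r hr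
    have : 0 < 1 - r := by linarith [hr.2]
    have := hle r hr
    gcongr
  have hd0 : 0 ≤ d := by
    refine le_liminf_of_le hcob ?_
    filter_upwards [self_mem_nhdsWithin] with z hz
    have hz1 : ‖z‖ < 1 := mem_ball_zero_iff.mp hz
    have := hb z hz1
    exact div_nonneg (by linarith) (by linarith)
  have hdA : d ≤ A.re := by
    refine le_of_forall_lt fun c hc => ?_
    obtain ⟨c', hcc, hc'⟩ := exists_between hc
    refine lt_of_lt_of_le hcc (ge_of_tendsto hre ?_)
    filter_upwards [hlow c' hc', hlere] with r h h'
    linarith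
  have hAd : ‖A‖ ≤ d := by
    refine le_of_forall_gt_imp_ge_of_dense fun D hD => ?_
    have hf := frequently_lt_of_liminf_lt hcob hD
    have hlim : Tendsto (fun r : ℝ => 2 * D / (1 + r)) (𝓝[<] 1) (𝓝 (2 * D / (1 + 1))) :=
      tendsto_const_nhds.div (tendsto_const_nhds.add hr1) (by norm_num)
    have : 2 * D / (1 + 1) = D := by ring
    rw [this] at hlim
    refine le_of_tendsto_of_tendsto hnm hlim ?_
    filter_upwards [ev_lt_one] with r hr
    have J := julia hφ hφm hζ hω h1 (hd0.trans hD.le) hf hr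
    have hφz : ‖φ (r • ζ)‖ < 1 := hb _ (by rw [radial_norm hζ hr]; exact hr.2)
    have h5 := (hle r hr).trans (Complex.re_le_norm _)
    have hpos : 0 < 1 - r := by linarith [hr.2]
    have hD0 : 0 ≤ D := hd0.trans hD.le
    rw [div_le_div_iff₀ hpos (by linarith [hr.1])]
    generalize ‖(1 - ⟪ω, φ (r • ζ)⟫ : ℂ)‖ = x at *
    have hx : 0 < x := by linarith
    have h6 : (1 - ‖φ (r • ζ)‖ ^ 2) ≤ 2 * x := by nlinarith [norm_nonneg (φ (r • ζ))]
    have h7 : (1 - ‖φ (r • ζ)‖ ^ 2) * D * (1 - r) ≤ 2 * x * D * (1 - r) := by gcongr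
    refine le_of_mul_le_mul_right ?_ hx
    linarith
  have hAre : A.re = d := le_antisymm ((Complex.re_le_norm A).trans hAd) hdA
  have hAeq : A = (d : ℂ) := by
    have h2 : ‖A‖ ^ 2 = A.re * A.re + A.im * A.im := by
      rw [Complex.sq_norm, Complex.normSq_apply]
    have him : A.im = 0 := by
      have : A.im * A.im ≤ 0 := by nlinarith [norm_nonneg A]
      nlinarith
    apply Complex.ext
    · simpa using hAre
    · simpa using him
  have hq : Tendsto (fun r : ℝ => (1 - ‖φ (r • ζ)‖) / (1 - r)) (𝓝[<] 1) (𝓝 d) := by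
    rw [hAre] at hre
    refine tendsto_order.mpr ⟨hlow, fun c hc => ?_⟩
    filter_upwards [hlere, hre.eventually_lt_const hc] with r h h'
    linarith
  refine ⟨?_, hAeq ▸ hA, ?_⟩
  · -- positivity
    have h0 := hb 0 (by simp)
    set m := ‖φ 0‖ with hm
    have hmp : 0 < (1 - m) ^ 2 / 2 := by have : 0 < 1 - m := by linarith
                                         positivity
    refine lt_of_lt_of_le hmp (ge_of_tendsto hq ?_)
    filter_upwards [ev_lt_one] with r hr
    have hpos : 0 < 1 - r := by linarith [hr.2]
    rw [le_div_iff₀ hpos]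
    have hn1 : ‖r • ζ‖ < 1 := by rw [radial_norm hζ hr]; exact hr.2
    have hφz := hb _ hn1
    have sp := schwarz_pick hφ hφm hn1 (w := 0) (by simp)
    rw [radial_norm hζ hr] at sp
    simp at sp
    rw [← hm] at sp
    have h3 : 1 - m ≤ ‖(1 - ⟪φ 0, φ (r • ζ)⟫ : ℂ)‖ := by
      have h2 : ‖(⟪φ 0, φ (r • ζ)⟫ : ℂ)‖ ≤ ‖φ 0‖ * ‖φ (r • ζ)‖ := norm_inner_le_norm _ _
      have h3 := norm_sub_norm_le (1 : ℂ) ⟪φ 0, φ (r • ζ)⟫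
      rw [norm_one] at h3
      have : ‖φ 0‖ * ‖φ (r • ζ)‖ ≤ ‖φ 0‖ := mul_le_of_le_one_right (norm_nonneg _) hφz.le
      linarith
    have h4 : (1 - m) ^ 2 ≤ ‖(1 - ⟪φ 0, φ (r • ζ)⟫ : ℂ)‖ ^ 2 := by
      have : 0 ≤ 1 - m := by linarith
      gcongr
    have h5 : (1 - r) * (1 - m) ^ 2 ≤ (1 - r ^ 2) * ‖(1 - ⟪φ 0, φ (r • ζ)⟫ : ℂ)‖ ^ 2 := by
      have : 1 - r ≤ 1 - r ^ 2 := by nlinarith [hr.1, hr.2]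
      have : 0 ≤ 1 - r ^ 2 := by nlinarith [hr.1, hr.2]
      gcongr
    have h6 : (1 - ‖φ (r • ζ)‖ ^ 2) * (1 - m ^ 2) ≤ 2 * (1 - ‖φ (r • ζ)‖) := by
      have a1 : 0 ≤ 1 - ‖φ (r • ζ)‖ ^ 2 := by nlinarith [norm_nonneg (φ (r • ζ))]
      have a2 : (1 - ‖φ (r • ζ)‖ ^ 2) * (1 - m ^ 2) ≤ 1 - ‖φ (r • ζ)‖ ^ 2 :=
        mul_le_of_le_one_right a1 (by nlinarith [sq_nonneg m])
      nlinarith [norm_nonneg (φ (r • ζ))]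
    linarith
  · have hlim : Tendsto (fun r : ℝ => 2 * ((1 - ⟪ω, φ (r • ζ)⟫ : ℂ).re / (1 - r)) -
        (1 - ‖φ (r • ζ)‖) / (1 - r) * (1 + ‖φ (r • ζ)‖)) (𝓝[<] 1)
        (𝓝 (2 * A.re - d * (1 + ‖ω‖))) :=
      (tendsto_const_nhds.mul hre).sub (hq.mul (tendsto_const_nhds.add h1.norm))
    rw [hAre, hω, show 2 * d - d * (1 + 1) = 0 by ring] at hlim
    refine hlim.congr fun r => ?_
    rw [norm_sub_rev, norm_sub_sq (𝕜 := ℂ), hω]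
    simp
    ring

lemma kernel_adjoint {N : ℕ} {t : ℝ} (S : BallKernelSpace N t)
    {φ : EuclideanSpace ℂ (Fin N) → EuclideanSpace ℂ (Fin N)}
    (hφm : Set.MapsTo φ (Ball N) (Ball N)) {C : S.H →L[ℂ] S.H}
    (hC : S.IsCompositionOperator φ C) {w : EuclideanSpace ℂ (Fin N)} (hw : w ∈ Ball N) :
    ContinuousLinearMap.adjoint C (S.kernel w) = S.kernel (φ w) := by
  refine ext_inner_right ℂ fun f => ?_
  rw [ContinuousLinearMap.adjoint_inner_left, S.reproducing _ w hw, hC f w hw,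
    S.reproducing _ _ (hφm hw)]

lemma kernel_inner {N : ℕ} {t : ℝ} (S : BallKernelSpace N t)
    {a b : EuclideanSpace ℂ (Fin N)} (ha : a ∈ Ball N) (hb : b ∈ Ball N) :
    ⟪S.kernel a, S.kernel b⟫ = (1 - ⟪b, a⟫ : ℂ) ^ (-(t : ℂ)) := by
  rw [S.reproducing _ a ha, S.eval_kernel b hb a ha]

lemma kernel_norm {N : ℕ} {t : ℝ} (S : BallKernelSpace N t)
    {a : EuclideanSpace ℂ (Fin N)} (ha : a ∈ Ball N) :
    ‖S.kernel a‖ ^ 2 = (1 - ‖a‖ ^ 2) ^ (-t) := by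
  have h := kernel_inner S ha ha
  have ha1 : ‖a‖ < 1 := mem_ball_zero_iff.mp ha
  have hpos : 0 ≤ 1 - ‖a‖ ^ 2 := by nlinarith [norm_nonneg a]
  rw [inner_self_eq_norm_sq_to_K, inner_self_eq_norm_sq_to_K] at h
  simp only [Complex.coe_algebraMap] at h
  rw [show (1 - (‖a‖ : ℂ) ^ 2) = ((1 - ‖a‖ ^ 2 : ℝ) : ℂ) by push_cast; rfl,
    ← Complex.ofReal_neg, ← Complex.ofReal_cpow hpos] at h
  exact_mod_cast h

lemma pow_quot {a t : ℝ} (ha : 0 < a) {x : ℂ} (hx : 0 < x.re) :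
    ((a : ℂ) / x) ^ (t : ℂ) = ((a ^ t : ℝ) : ℂ) * x ^ (-(t : ℂ)) := by
  have hx0 : x ≠ 0 := by rintro rfl; simp at hx
  have harg : x.arg ≠ Real.pi := by
    intro h
    have := Complex.arg_eq_pi_iff.mp h
    linarith [this.1]
  have ha0 : (a : ℂ) ≠ 0 := by exact_mod_cast ha.ne'
  rw [Complex.ofReal_cpow ha.le, Complex.cpow_def_of_ne_zero (div_ne_zero ha0 hx0),
    Complex.cpow_def_of_ne_zero ha0, Complex.cpow_def_of_ne_zero hx0, ← Complex.exp_add,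
    div_eq_mul_inv, Complex.log_ofReal_mul ha (inv_ne_zero hx0), Complex.log_inv _ harg,
    Complex.ofReal_log ha.le]
  congr 1
  ring

/-- Let `φ, ψ` be holomorphic self-maps of `B_N` and `ζ₁, ζ₂, ω ∈ ∂B_N` be
such that `φ` has restricted limit `ω` at `ζ₁`, `ψ` has restricted limit `ω` at `ζ₂`, and the
angular derivatives `A_φ(ζ₁)`, `A_ψ(ζ₂)` exist.  Then on the Hardy space `H²(B_N)` (`t = N`)
and on the weighted Bergman spaces `A²_s(B_N)` (`t = N + s + 1`, `s > -1`) one has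
`lim_{r→1⁻} ⟨C_ψ* k_{rζ₂}, C_φ* k_{rζ₁}⟩ = (2/(d_φ(ζ₁) + d_ψ(ζ₂)))^t > 0`;  equivalently,
`lim_{r→1⁻} ((1-r²)/(1-⟨φ(rζ₁), ψ(rζ₂)⟩))^t = (2/(d_φ(ζ₁) + d_ψ(ζ₂)))^t`. -/
theorem adjoint_kernel_inner_limit_ball
    (N : ℕ) (t : ℝ) (ht : t = N ∨ ∃ s : ℝ, -1 < s ∧ t = N + s + 1)
    (S : BallKernelSpace N t)
    (φ ψ : EuclideanSpace ℂ (Fin N) → EuclideanSpace ℂ (Fin N))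
    (hφ : DifferentiableOn ℂ φ (Ball N)) (hφm : Set.MapsTo φ (Ball N) (Ball N))
    (hψ : DifferentiableOn ℂ ψ (Ball N)) (hψm : Set.MapsTo ψ (Ball N) (Ball N))
    (ζ₁ ζ₂ ω : EuclideanSpace ℂ (Fin N))
    (hζ₁ : ‖ζ₁‖ = 1) (hζ₂ : ‖ζ₂‖ = 1) (hω : ‖ω‖ = 1)
    (hRφ : HasRestrictedLimit φ ζ₁ ω) (hRψ : HasRestrictedLimit ψ ζ₂ ω)
    (hAφ : ∃ A : ℂ, HasRestrictedLimit (fun z => (1 - ⟪ω, φ z⟫) / (1 - ⟪ζ₁, z⟫)) ζ₁ A)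
    (hAψ : ∃ A : ℂ, HasRestrictedLimit (fun z => (1 - ⟪ω, ψ z⟫) / (1 - ⟪ζ₂, z⟫)) ζ₂ A)
    (Cφ Cψ : S.H →L[ℂ] S.H)
    (hCφ : S.IsCompositionOperator φ Cφ) (hCψ : S.IsCompositionOperator ψ Cψ) :
    0 < (2 / (boundaryDilation φ ζ₁ + boundaryDilation ψ ζ₂)) ^ t ∧
    Tendsto
      (fun r : ℝ =>
        ⟪ContinuousLinearMap.adjoint Cφ ((‖S.kernel (r • ζ₁)‖ : ℂ)⁻¹ • S.kernel (r • ζ₁)),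
          ContinuousLinearMap.adjoint Cψ ((‖S.kernel (r • ζ₂)‖ : ℂ)⁻¹ • S.kernel (r • ζ₂))⟫)
      (𝓝[<] (1 : ℝ))
      (𝓝 (((2 / (boundaryDilation φ ζ₁ + boundaryDilation ψ ζ₂)) ^ t : ℝ) : ℂ)) ∧
    Tendsto
      (fun r : ℝ => ((1 - (r : ℂ) ^ 2) / (1 - ⟪ψ (r • ζ₂), φ (r • ζ₁)⟫)) ^ (t : ℂ))
      (𝓝[<] (1 : ℝ))
      (𝓝 (((2 / (boundaryDilation φ ζ₁ + boundaryDilation ψ ζ₂)) ^ t : ℝ) : ℂ)) := by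
  obtain ⟨hd1, hT1, hS1⟩ := julia_carath hφ hφm hζ₁ hω hRφ hAφ
  obtain ⟨hd2, hT2, hS2⟩ := julia_carath hψ hψm hζ₂ hω hRψ hAψ
  set d₁ := boundaryDilation φ ζ₁
  set d₂ := boundaryDilation ψ ζ₂
  have hdpos : 0 < 2 / (d₁ + d₂) := by positivity
  have hr1 : Tendsto (fun r : ℝ => (r : ℂ)) (𝓝[<] 1) (𝓝 1) := by
    have := (Complex.continuous_ofReal.tendsto (1 : ℝ)).mono_left
      (nhdsWithin_le_nhds (s := Set.Iio 1))
    simpa using this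
  have hmem : ∀ ζ : EuclideanSpace ℂ (Fin N), ‖ζ‖ = 1 → ∀ r : ℝ, 0 < r ∧ r < 1 →
      r • ζ ∈ Ball N := by
    intro ζ hζ r hr
    rw [mem_ball_zero_iff, radial_norm hζ hr]
    exact hr.2
  -- the cross term
  have hcross : Tendsto (fun r : ℝ => (⟪ψ (r • ζ₂) - ω, φ (r • ζ₁) - ω⟫ : ℂ) / (1 - (r : ℂ)))
      (𝓝[<] 1) (𝓝 0) := by
    have hsum := (hS1.add hS2)
    rw [add_zero] at hsum
    refine squeeze_zero_norm' ?_ hsum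
    filter_upwards [ev_lt_one] with r hr
    have hpos : 0 < 1 - r := by linarith [hr.2]
    rw [norm_div, show (1 - (r : ℂ)) = ((1 - r : ℝ) : ℂ) by push_cast; rfl,
      Complex.norm_real, Real.norm_of_nonneg hpos.le, ← add_div]
    gcongr
    have h2 : ‖(⟪ψ (r • ζ₂) - ω, φ (r • ζ₁) - ω⟫ : ℂ)‖ ≤ ‖ψ (r • ζ₂) - ω‖ * ‖φ (r • ζ₁) - ω‖ :=
      norm_inner_le_norm _ _
    nlinarith [sq_nonneg (‖ψ (r • ζ₂) - ω‖ - ‖φ (r • ζ₁) - ω‖), sq_nonneg (‖ψ (r • ζ₂) - ω‖),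
      sq_nonneg (‖φ (r • ζ₁) - ω‖)]
  have hT2' : Tendsto (fun r : ℝ => (1 - ⟪ψ (r • ζ₂), ω⟫) / (1 - (r : ℂ))) (𝓝[<] 1)
      (𝓝 (d₂ : ℂ)) := by
    have := (Complex.continuous_conj.tendsto _).comp hT2
    rw [Complex.conj_ofReal] at this
    refine this.congr fun r => ?_
    simp only [Function.comp, map_div₀, map_sub, map_one, Complex.conj_ofReal, inner_conj_symm]
  have hden : Tendsto (fun r : ℝ => (1 - ⟪ψ (r • ζ₂), φ (r • ζ₁)⟫ : ℂ) / (1 - (r : ℂ))) (𝓝[<] 1)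
      (𝓝 ((d₁ : ℂ) + d₂)) := by
    have h := (hT1.add hT2').sub hcross
    rw [sub_zero] at h
    refine h.congr fun r => ?_
    rw [← add_div, ← sub_div, inner_sub_left, inner_sub_right, inner_sub_right,
      inner_self_eq_norm_sq_to_K, hω]
    congr 1
    simp
    ring
  have hdne : ((d₁ : ℂ) + d₂) ≠ 0 := by
    have : d₁ + d₂ ≠ 0 := by positivity
    exact_mod_cast this
  have hbase : Tendsto (fun r : ℝ => (1 - (r : ℂ) ^ 2) / (1 - ⟪ψ (r • ζ₂), φ (r • ζ₁)⟫)) (𝓝[<] 1)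
      (𝓝 ((2 / (d₁ + d₂) : ℝ) : ℂ)) := by
    have h : Tendsto (fun r : ℝ => (1 + (r : ℂ)) / ((1 - ⟪ψ (r • ζ₂), φ (r • ζ₁)⟫ : ℂ)
        / (1 - (r : ℂ)))) (𝓝[<] 1) (𝓝 ((1 + 1) / ((d₁ : ℂ) + d₂))) :=
      (tendsto_const_nhds.add hr1).div hden hdne
    have e : ((2 / (d₁ + d₂) : ℝ) : ℂ) = (1 + 1) / ((d₁ : ℂ) + d₂) := by push_cast; norm_num
    rw [e]
    refine h.congr fun r => ?_
    rw [div_div_eq_mul_div]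
    congr 1
    ring
  have hpow : Tendsto
      (fun r : ℝ => ((1 - (r : ℂ) ^ 2) / (1 - ⟪ψ (r • ζ₂), φ (r • ζ₁)⟫)) ^ (t : ℂ))
      (𝓝[<] (1 : ℝ)) (𝓝 (((2 / (d₁ + d₂)) ^ t : ℝ) : ℂ)) := by
    rw [Complex.ofReal_cpow hdpos.le]
    exact hbase.cpow tendsto_const_nhds (Complex.ofReal_mem_slitPlane.mpr hdpos)
  refine ⟨Real.rpow_pos_of_pos hdpos t, ?_, hpow⟩
  refine hpow.congr' ?_
  filter_upwards [ev_lt_one] with r hr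
  have m1 := hmem ζ₁ hζ₁ r hr
  have m2 := hmem ζ₂ hζ₂ r hr
  have ha : 0 < 1 - r ^ 2 := by nlinarith [hr.1, hr.2]
  have hx := one_sub_re_pos (mem_ball_zero_iff.mp (hψm m2)) (mem_ball_zero_iff.mp (hφm m1)).le
  have n1 := kernel_norm S m1
  have n2 := kernel_norm S m2
  rw [radial_norm hζ₁ hr] at n1
  rw [radial_norm hζ₂ hr] at n2
  have n12 : ‖S.kernel (r • ζ₁)‖ = ‖S.kernel (r • ζ₂)‖ := by
    have := n1.trans n2.symm
    exact (sq_eq_sq₀ (norm_nonneg _) (norm_nonneg _)).mp this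
  have n3 : (1 - r ^ 2) ^ t = ‖S.kernel (r • ζ₂)‖⁻¹ * ‖S.kernel (r • ζ₂)‖⁻¹ := by
    rw [← mul_inv, ← sq, n2, Real.rpow_neg ha.le, inv_inv]
  rw [map_smul, map_smul, kernel_adjoint S hφm hCφ m1, kernel_adjoint S hψm hCψ m2,
    inner_smul_left, inner_smul_right, kernel_inner S (hφm m1) (hψm m2), n12,
    show (1 - (r : ℂ) ^ 2) = ((1 - r ^ 2 : ℝ) : ℂ) by push_cast; rfl, pow_quot ha hx, n3]
  rw [← Complex.ofReal_inv, Complex.conj_ofReal]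
  push_cast
  ring
end
end

section
/- Let φ and ψ be automorphisms of the unit disk D. If the commutator [C_ψ*, C_φ] = C_ψ* C_φ − C_φ C_ψ* is compact on H^2(D), or on A^2_s(D) for some s > −1, then φ∘ψ = ψ∘φ. -/
open Filter MeasureTheory Metric Set
open scoped ComplexInnerProductSpace Topology

noncomputable section

/-- The open unit disk `D` in `ℂ`. -/
abbrev Disk : Set ℂ := Metric.ball 0 1

/-- An abstract presentation of a reproducing-kernel Hilbert space of holomorphic functions
on the unit disk `D` with reproducing kernel `K_w(z) = (1 - z·conj w)^{-t}`.  For `t = 1`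
this is the Hardy space `H²(D)`; for `t = s + 2` (`s > -1`) it is the weighted Bergman space
`A²_s(D)`.  Injectivity of evaluation forces the kernels to be total, so such a structure
determines the space uniquely up to canonical unitary equivalence. -/
structure DiskKernelSpace (t : ℝ) where
  (H : Type)
  [grp : NormedAddCommGroup H]
  [ips : InnerProductSpace ℂ H]
  [cpl : CompleteSpace H]
  eval : H → ℂ → ℂ
  eval_add : ∀ f g : H, ∀ z, eval (f + g) z = eval f z + eval g z
  eval_smul : ∀ (c : ℂ) (f : H) (z : ℂ), eval (c • f) z = c * eval f z
  holo : ∀ f : H, DifferentiableOn ℂ (eval f) Disk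
  eval_injective : ∀ f g : H, (∀ z ∈ Disk, eval f z = eval g z) → f = g
  kernel : ℂ → H
  eval_kernel : ∀ w ∈ Disk, ∀ z ∈ Disk,
    eval (kernel w) z = (1 - z * (starRingEnd ℂ) w) ^ (-(t : ℂ))
  reproducing : ∀ (f : H), ∀ w ∈ Disk, ⟪kernel w, f⟫ = eval f w

attribute [instance] DiskKernelSpace.grp DiskKernelSpace.ips DiskKernelSpace.cpl

/-- `T` is the composition operator `C_φ : f ↦ f ∘ φ` on `S`. -/
def DiskKernelSpace.IsCompositionOperator {t : ℝ} (S : DiskKernelSpace t)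
    (φ : ℂ → ℂ) (T : S.H →L[ℂ] S.H) : Prop :=
  ∀ f : S.H, ∀ z ∈ Disk, S.eval (T f) z = S.eval f (φ z)

/-- `φ` is an automorphism (biholomorphic self-map) of the unit disk `D`. -/
def IsDiskAutomorphism (φ : ℂ → ℂ) : Prop :=
  DifferentiableOn ℂ φ Disk ∧ Set.MapsTo φ Disk Disk ∧
    ∃ ψ : ℂ → ℂ, DifferentiableOn ℂ ψ Disk ∧ Set.MapsTo ψ Disk Disk ∧
      (∀ z ∈ Disk, ψ (φ z) = z) ∧ (∀ z ∈ Disk, φ (ψ z) = z)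

lemma conj_mul_ne {a z : ℂ} (ha : ‖a‖ < 1) (hz : ‖z‖ ≤ 1) : 1 - (starRingEnd ℂ) a * z ≠ 0 := by
  intro h
  have h1 : (starRingEnd ℂ) a * z = 1 := (sub_eq_zero.mp h).symm
  have h2 : ‖a‖ * ‖z‖ = 1 := by
    have := congrArg norm h1
    simpa using this
  nlinarith [norm_nonneg a, norm_nonneg z]

lemma mobius_id {a C z w : ℂ} (ha : ‖a‖ < 1) (hC : ‖C‖ = 1) (hz : ‖z‖ ≤ 1) (hw : ‖w‖ ≤ 1) :
    1 - (C * ((a - z) / (1 - (starRingEnd ℂ) a * z))) *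
      (starRingEnd ℂ) (C * ((a - w) / (1 - (starRingEnd ℂ) a * w))) =
    (1 - a * (starRingEnd ℂ) a) * (1 - z * (starRingEnd ℂ) w) /
      ((1 - (starRingEnd ℂ) a * z) * (1 - a * (starRingEnd ℂ) w)) := by
  have h1 := conj_mul_ne ha hz
  have h2 := conj_mul_ne ha hw
  have h3 : 1 - a * (starRingEnd ℂ) w ≠ 0 := by
    intro h
    apply h2
    have := congrArg (starRingEnd ℂ) h
    simpa using this
  have hCC : C * (starRingEnd ℂ) C = 1 := by
    rw [Complex.mul_conj, Complex.normSq_eq_norm_sq, hC]; simp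
  simp only [map_mul, map_div₀, map_sub, map_one, Complex.conj_conj]
  rw [mul_comm _ z] at h1 ⊢
  field_simp
  linear_combination (-(a - z) * ((starRingEnd ℂ) a - (starRingEnd ℂ) w)) * hCC

lemma mobius_norm {a C z : ℂ} (ha : ‖a‖ < 1) (hC : ‖C‖ = 1) (hz : ‖z‖ ≤ 1) :
    1 - ‖C * ((a - z) / (1 - (starRingEnd ℂ) a * z))‖ ^ 2 =
    (1 - ‖a‖ ^ 2) * (1 - ‖z‖ ^ 2) / ‖1 - (starRingEnd ℂ) a * z‖ ^ 2 := by
  have h := mobius_id ha hC hz hz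
  have e : 1 - a * (starRingEnd ℂ) z = (starRingEnd ℂ) (1 - (starRingEnd ℂ) a * z) := by simp
  rw [e] at h
  simp only [Complex.mul_conj, Complex.normSq_eq_norm_sq] at h
  exact_mod_cast h

lemma mobius_maps {a z : ℂ} (ha : ‖a‖ < 1) (hz : z ∈ Disk) :
    (a - z) / (1 - (starRingEnd ℂ) a * z) ∈ Disk := by
  have hz' : ‖z‖ < 1 := by simpa using hz
  have h := mobius_norm (C := 1) ha (by simp) hz'.le
  rw [one_mul] at h
  have hd := norm_pos_iff.mpr (conj_mul_ne ha hz'.le)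
  have : 0 < (1 - ‖a‖ ^ 2) * (1 - ‖z‖ ^ 2) / ‖1 - (starRingEnd ℂ) a * z‖ ^ 2 := by
    have h1 : 0 < 1 - ‖a‖ ^ 2 := by nlinarith [norm_nonneg a]
    have h2 : 0 < 1 - ‖z‖ ^ 2 := by nlinarith [norm_nonneg z]
    positivity
  rw [mem_ball_zero_iff]
  by_contra hc
  push Not at hc
  nlinarith

lemma mobius_diff {a : ℂ} (ha : ‖a‖ < 1) :
    DifferentiableOn ℂ (fun z => (a - z) / (1 - (starRingEnd ℂ) a * z)) Disk := by
  intro z hz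
  have hz' : ‖z‖ < 1 := by simpa using hz
  have := conj_mul_ne ha hz'.le
  apply DifferentiableAt.differentiableWithinAt
  fun_prop (disch := assumption)

lemma mobius_invol {a z : ℂ} (ha : ‖a‖ < 1) (hz : z ∈ Disk) :
    (a - (a - z) / (1 - (starRingEnd ℂ) a * z)) /
      (1 - (starRingEnd ℂ) a * ((a - z) / (1 - (starRingEnd ℂ) a * z))) = z := by
  have hz' : ‖z‖ < 1 := by simpa using hz
  have h1 := conj_mul_ne ha hz'.le
  have hm := mobius_maps ha hz
  have hm' : ‖(a - z) / (1 - (starRingEnd ℂ) a * z)‖ < 1 := by simpa using hm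
  have h2 := conj_mul_ne ha hm'.le
  rw [div_eq_iff h2]
  rw [mul_comm _ z] at h1 ⊢
  field_simp
  ring

lemma aut_form {φ : ℂ → ℂ} (hφ : IsDiskAutomorphism φ) :
    ∃ a C : ℂ, ‖a‖ < 1 ∧ ‖C‖ = 1 ∧
      ∀ z ∈ Disk, φ z = C * ((a - z) / (1 - (starRingEnd ℂ) a * z)) := by
  obtain ⟨hd, hm, χ, hχd, hχm, h1, h2⟩ := hφ
  have h0 : (0 : ℂ) ∈ Disk := by simp
  have haD : χ 0 ∈ Disk := hχm h0
  have hφa : φ (χ 0) = 0 := h2 0 h0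
  generalize χ 0 = a at haD hφa
  have ha : ‖a‖ < 1 := by simpa using haD
  set τ : ℂ → ℂ := fun z => (a - z) / (1 - (starRingEnd ℂ) a * z) with hτ
  have hτm : MapsTo τ Disk Disk := fun z hz => mobius_maps ha hz
  have hτd : DifferentiableOn ℂ τ Disk := mobius_diff ha
  have hττ : ∀ z ∈ Disk, τ (τ z) = z := fun z hz => mobius_invol ha hz
  have hτ0 : τ 0 = a := by simp [hτ]
  have hτa : τ a = 0 := by simp [hτ]
  set F : ℂ → ℂ := fun z => φ (τ z) with hF
  set G : ℂ → ℂ := fun z => τ (χ z) with hG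
  have hFd : DifferentiableOn ℂ F Disk := hd.comp hτd hτm
  have hGd : DifferentiableOn ℂ G Disk := hτd.comp hχd hχm
  have hFm : MapsTo F Disk Disk := hm.comp hτm
  have hGm : MapsTo G Disk Disk := hτm.comp hχm
  have hF0 : F 0 = 0 := by simp [hF, hτ0, hφa]
  have hG0 : G 0 = 0 := by
    have : χ 0 = a := by rw [← hφa, h1 a haD]
    simp [hG, this, hτa]
  have hGF : ∀ z ∈ Disk, G (F z) = z := fun z hz => by
    simp only [hF, hG]; rw [h1 _ (hτm hz), hττ z hz]
  have hhalf : (1 / 2 : ℂ) ∈ Disk := by simp; norm_num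
  have hFle : ‖F (1 / 2)‖ ≤ ‖(1 / 2 : ℂ)‖ :=
    Complex.norm_le_norm_of_mapsTo_ball hFd (hFm.mono_right ball_subset_closedBall) hF0 (by simpa using hhalf)
  have hGle : ‖G (F (1 / 2))‖ ≤ ‖F (1 / 2)‖ :=
    Complex.norm_le_norm_of_mapsTo_ball hGd (hGm.mono_right ball_subset_closedBall) hG0 (by simpa using hFm hhalf)
  rw [hGF _ hhalf] at hGle
  have heq := le_antisymm hFle hGle
  obtain ⟨C, hC, hFC⟩ := Complex.affine_of_mapsTo_ball_of_exists_norm_dslope_eq_div'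
    (f := F) (c := 0) (R₁ := 1) (R₂ := 1) hFd
    (by rw [hF0]; exact hFm.mono_right ball_subset_closedBall)
    ⟨1 / 2, hhalf, by
      rw [dslope_of_ne _ (by norm_num), slope_def_field, hF0, sub_zero, sub_zero, norm_div, heq]
      norm_num⟩
  refine ⟨a, C, ha, by simpa using hC, fun z hz => ?_⟩
  have := hFC (hτm hz)
  simp only [hF0, sub_zero, zero_add, smul_eq_mul] at this
  rw [mul_comm, ← this]
  simp only [hF]
  rw [hττ z hz]

lemma aut_kernel {φ : ℂ → ℂ} (hφ : IsDiskAutomorphism φ) :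
    ∃ h : ℂ → ℂ, ∀ z ∈ Disk, ∀ w ∈ Disk, 1 - φ z * (starRingEnd ℂ) (φ w) =
      h z * (starRingEnd ℂ) (h w) * (1 - z * (starRingEnd ℂ) w) := by
  obtain ⟨a, C, ha, hC, h⟩ := aut_form hφ
  refine ⟨fun z => (Real.sqrt (1 - ‖a‖ ^ 2) : ℂ) / (1 - (starRingEnd ℂ) a * z), fun z hz w hw => ?_⟩
  have hz' : ‖z‖ < 1 := by simpa using hz
  have hw' : ‖w‖ < 1 := by simpa using hw
  have hs : (Real.sqrt (1 - ‖a‖ ^ 2) : ℂ) * (Real.sqrt (1 - ‖a‖ ^ 2) : ℂ)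
      = 1 - a * (starRingEnd ℂ) a := by
    rw [← Complex.ofReal_mul, Real.mul_self_sqrt (by nlinarith [norm_nonneg a]),
      Complex.mul_conj, Complex.normSq_eq_norm_sq]
    push_cast; rfl
  rw [h z hz, h w hw, mobius_id ha hC hz'.le hw'.le, ← hs]
  simp only [map_div₀, map_sub, map_mul, map_one, Complex.conj_conj, Complex.conj_ofReal]
  rw [div_mul_div_comm, div_mul_eq_mul_div]

lemma aut_bound {φ : ℂ → ℂ} (hφ : IsDiskAutomorphism φ) :
    ∃ c > 0, ∀ z ∈ Disk, c * (1 - ‖φ z‖ ^ 2) ≤ 1 - ‖z‖ ^ 2 := by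
  obtain ⟨a, C, ha, hC, h⟩ := aut_form hφ
  refine ⟨(1 - ‖a‖) ^ 2, by have : 0 < 1 - ‖a‖ := by linarith
                            positivity, fun z hz => ?_⟩
  have hz' : ‖z‖ < 1 := by simpa using hz
  have hd : 1 - ‖a‖ ≤ ‖1 - (starRingEnd ℂ) a * z‖ := by
    have h1 := norm_sub_norm_le (1 : ℂ) ((starRingEnd ℂ) a * z)
    simp only [norm_one, norm_mul, RCLike.norm_conj] at h1
    nlinarith [norm_nonneg a, norm_nonneg z]
  have hdp := norm_pos_iff.mpr (conj_mul_ne ha hz'.le)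
  rw [h z hz, mobius_norm ha hC hz'.le, mul_div_assoc', div_le_iff₀ (by positivity)]
  have h1 : 0 ≤ 1 - ‖z‖ ^ 2 := by nlinarith [norm_nonneg z]
  have h2 : (1 - ‖a‖) ^ 2 ≤ ‖1 - (starRingEnd ℂ) a * z‖ ^ 2 := by
    apply pow_le_pow_left₀ (by linarith) hd
  have h3 : (1 - ‖a‖) ^ 2 * (1 - ‖a‖ ^ 2) ≤ ‖1 - (starRingEnd ℂ) a * z‖ ^ 2 := by
    nlinarith [sq_nonneg ‖a‖, sq_nonneg (1 - ‖a‖)]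
  nlinarith

lemma aut_ext {φ : ℂ → ℂ} (hφ : IsDiskAutomorphism φ) :
    ∃ m : ℂ → ℂ, DiffContOnCl ℂ m Disk ∧ (∀ z ∈ Disk, φ z = m z) ∧ ∀ z, ‖z‖ = 1 → ‖m z‖ = 1 := by
  obtain ⟨a, C, ha, hC, h⟩ := aut_form hφ
  refine ⟨_, DifferentiableOn.diffContOnCl ?_, h, fun z hz => ?_⟩
  · intro z hz
    have hz' : ‖z‖ ≤ 1 := by
      rw [closure_ball _ one_ne_zero] at hz
      simpa using hz
    have := conj_mul_ne ha hz'
    apply DifferentiableAt.differentiableWithinAt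
    fun_prop (disch := assumption)
  · have := mobius_norm ha hC hz.le
    rw [hz] at this
    norm_num at this ⊢
    have h4 := sub_eq_zero.mp this
    have h5 : ‖C * ((a - z) / (1 - (starRingEnd ℂ) a * z))‖ ^ 2 = 1 := by
      simpa using h4.symm
    have h6 : ‖C * ((a - z) / (1 - (starRingEnd ℂ) a * z))‖ = 1 := by
      exact (pow_eq_one_iff_of_nonneg (norm_nonneg _) two_ne_zero).mp h5
    simpa using h6

lemma aut_comp {φ ψ : ℂ → ℂ} (hφ : IsDiskAutomorphism φ) (hψ : IsDiskAutomorphism ψ) :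
    IsDiskAutomorphism (fun z => φ (ψ z)) := by
  obtain ⟨hd, hm, χ, hχd, hχm, h1, h2⟩ := hφ
  obtain ⟨hd', hm', χ', hχd', hχm', h1', h2'⟩ := hψ
  refine ⟨hd.comp hd' hm', hm.comp hm', fun z => χ' (χ z), hχd'.comp hχd hχm, hχm'.comp hχm, ?_, ?_⟩
  · intro z hz; simp only; rw [h1 _ (hm' hz), h1' z hz]
  · intro z hz; simp only; rw [h2' _ (hχm hz), h2 z hz]

lemma aut_id : IsDiskAutomorphism (fun z => z) :=
  ⟨differentiableOn_id, fun _ h => h, fun z => z, differentiableOn_id, fun _ h => h,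
    fun _ _ => rfl, fun _ _ => rfl⟩

/-- Nonnegative power series of `(1-x)^{-s}`. -/
lemma series (s : ℝ) (hs : 0 ≤ s) : ∃ c : ℕ → ℝ, (∀ n, 0 ≤ c n) ∧
    ∀ x : ℂ, ‖x‖ < 1 → HasSum (fun n => (c n : ℂ) * x ^ n) ((1 - x) ^ (-(s : ℂ))) := by
  refine ⟨fun n => Ring.choose (s + n - 1) n, fun n => ?_, fun x hx => ?_⟩
  · simp only [← Ring.multichoose_eq]
    have h := Ring.factorial_nsmul_multichoose_eq_ascPochhammer s n
    rw [Polynomial.ascPochhammer_smeval_eq_eval] at h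
    have h2 : 0 ≤ (ascPochhammer ℝ n).eval s := by
      induction n with
      | zero => simp
      | succ n ih =>
        rw [ascPochhammer_succ_eval]
        have := ih (by rw [Ring.factorial_nsmul_multichoose_eq_ascPochhammer, Polynomial.ascPochhammer_smeval_eq_eval])
        positivity
    rw [← h, nsmul_eq_mul] at h2
    have : (0 : ℝ) < n.factorial := by positivity
    exact nonneg_of_mul_nonneg_right h2 this
  · have h := (Complex.one_div_one_sub_cpow_hasFPowerSeriesOnBall_zero (s : ℂ)).hasSum (y := x)
      (by simpa [← ENNReal.ofReal_one, Metric.eball_ofReal] using hx)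
    simp only [zero_add, one_div, ← Complex.cpow_neg] at h
    convert! h using 2 with n
    simp [FormalMultilinearSeries.ofScalars, Complex.ofReal_choose, mul_comm]

lemma psd {ι : Type*} (r : ℝ) (hr : 0 ≤ r) (s : Finset ι) (d w : ι → ℂ) (hw : ∀ i, ‖w i‖ < 1) :
    0 ≤ (∑ i ∈ s, ∑ j ∈ s, (starRingEnd ℂ) (d i) * d j *
      (1 - w i * (starRingEnd ℂ) (w j)) ^ (-(r : ℂ))).re := by
  obtain ⟨c, hc, hsum⟩ := series r hr
  have h1 : HasSum (fun n => ∑ i ∈ s, ∑ j ∈ s, (starRingEnd ℂ) (d i) * d j *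
      ((c n : ℂ) * (w i * (starRingEnd ℂ) (w j)) ^ n)) (∑ i ∈ s, ∑ j ∈ s, (starRingEnd ℂ) (d i) * d j *
      (1 - w i * (starRingEnd ℂ) (w j)) ^ (-(r : ℂ))) := by
    refine hasSum_sum fun i _ => hasSum_sum fun j _ => HasSum.mul_left _ (hsum _ ?_)
    rw [norm_mul, RCLike.norm_conj]
    nlinarith [norm_nonneg (w i), norm_nonneg (w j), hw i, hw j]
  refine (Complex.hasSum_re h1).nonneg fun n => ?_
  have : ∑ i ∈ s, ∑ j ∈ s, (starRingEnd ℂ) (d i) * d j *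
      ((c n : ℂ) * (w i * (starRingEnd ℂ) (w j)) ^ n) =
      ((c n * ‖∑ j ∈ s, d j * (starRingEnd ℂ) (w j) ^ n‖ ^ 2 : ℝ) : ℂ) := by
    rw [Complex.ofReal_mul, ← Complex.normSq_eq_norm_sq, ← Complex.mul_conj, mul_comm (∑ j ∈ s, _), map_sum,
      Finset.sum_mul_sum, Finset.mul_sum]
    refine Finset.sum_congr rfl fun i _ => ?_
    rw [Finset.mul_sum]
    refine Finset.sum_congr rfl fun j _ => ?_
    simp only [map_mul, map_pow, Complex.conj_conj]
    ring
  rw [this, Complex.ofReal_re]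
  exact mul_nonneg (hc n) (sq_nonneg _)

lemma norm_sq_sum {H ι : Type*} [NormedAddCommGroup H] [InnerProductSpace ℂ H] (s : Finset ι)
    (c : ι → ℂ) (y : ι → H) :
    ‖∑ i ∈ s, c i • y i‖ ^ 2 =
      (∑ i ∈ s, ∑ j ∈ s, (starRingEnd ℂ) (c i) * c j * ⟪y i, y j⟫).re := by
  have h := inner_self_eq_norm_sq (𝕜 := ℂ) (∑ i ∈ s, c i • y i)
  rw [← h, sum_inner]
  simp only [inner_sum, inner_smul_left, inner_smul_right]
  simp only [RCLike.re_eq_complex_re]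
  congr 1
  refine Finset.sum_congr rfl fun i _ => Finset.sum_congr rfl fun j _ => by ring

section Aux

variable {t : ℝ} (S : DiskKernelSpace t)

lemma kernel_inner_s3 {z w : ℂ} (hz : z ∈ Disk) (hw : w ∈ Disk) :
    ⟪S.kernel z, S.kernel w⟫ = (1 - z * (starRingEnd ℂ) w) ^ (-(t : ℂ)) := by
  rw [S.reproducing _ z hz, S.eval_kernel w hw z hz]

lemma disk_pos {w : ℂ} (hw : w ∈ Disk) : 0 < 1 - ‖w‖ ^ 2 := by
  have : ‖w‖ < 1 := by simpa using hw
  nlinarith [norm_nonneg w]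

lemma norm_kernel {w : ℂ} (hw : w ∈ Disk) :
    ‖S.kernel w‖ ^ 2 = (1 - ‖w‖ ^ 2) ^ (-t) := by
  have h := inner_self_eq_norm_sq_to_K (𝕜 := ℂ) (S.kernel w)
  rw [kernel_inner_s3 S hw hw, Complex.mul_conj, Complex.normSq_eq_norm_sq] at h
  have h2 : ((1 : ℂ) - ((‖w‖ ^ 2 : ℝ) : ℂ)) ^ (-(t : ℂ)) = (((1 - ‖w‖ ^ 2) ^ (-t) : ℝ) : ℂ) := by
    rw [Complex.ofReal_cpow (disk_pos hw).le]
    push_cast; rfl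
  rw [h2] at h
  have h3 : (((1 - ‖w‖ ^ 2) ^ (-t) : ℝ) : ℂ) = ((‖S.kernel w‖ ^ 2 : ℝ) : ℂ) := by
    rw [h]; push_cast; rfl
  exact (Complex.ofReal_injective h3).symm

lemma norm_kernel_pos {w : ℂ} (hw : w ∈ Disk) : 0 < ‖S.kernel w‖ := by
  have h := norm_kernel S hw
  have := Real.rpow_pos_of_pos (disk_pos hw) (-t)
  rw [← h] at this
  exact lt_of_le_of_ne (norm_nonneg _) (fun h0 => by rw [← h0] at this; simp at this)

lemma dense_kernel :
    DenseRange (Finsupp.linearCombination ℂ (fun w : Disk => S.kernel w)) := by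
  have h : (LinearMap.range (Finsupp.linearCombination ℂ (fun w : Disk => S.kernel w))).topologicalClosure = ⊤ := by
    rw [Submodule.topologicalClosure_eq_top_iff, Submodule.eq_bot_iff]
    intro f hf
    rw [Submodule.mem_orthogonal] at hf
    apply S.eval_injective
    intro z hz
    rw [← S.reproducing f z hz, ← S.reproducing 0 z hz, inner_zero_right]
    apply hf
    exact ⟨Finsupp.single ⟨z, hz⟩ 1, by simp⟩
  rw [DenseRange, ← LinearMap.coe_range]
  exact Submodule.dense_iff_topologicalClosure_eq_top.mpr h

lemma multiplier (ht : 1 ≤ t) {χ : ℂ → ℂ} (hχ : IsDiskAutomorphism χ) :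
    ∃ M : S.H →L[ℂ] S.H, ‖M‖ ≤ 1 ∧ ∀ f, ∀ z ∈ Disk, S.eval (M f) z = χ z * S.eval f z := by
  obtain ⟨h, hh⟩ := aut_kernel hχ
  set e := Finsupp.linearCombination ℂ (fun w : Disk => S.kernel w) with he
  set g := Finsupp.linearCombination ℂ (fun w : Disk => (starRingEnd ℂ) (χ w) • S.kernel w) with hg
  have hb : ∀ x, ‖g x‖ ≤ 1 * ‖e x‖ := by
    intro x
    rw [one_mul]
    apply (sq_le_sq₀ (norm_nonneg _) (norm_nonneg _)).mp
    rw [← sub_nonneg, he, hg, Finsupp.linearCombination_apply, Finsupp.linearCombination_apply,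
      Finsupp.sum, Finsupp.sum, norm_sq_sum, norm_sq_sum, ← Complex.sub_re]
    have key := psd (t - 1) (by linarith) x.support (fun i => x i * (starRingEnd ℂ) (h i))
      (fun i : Disk => (i : ℂ)) (fun i => mem_ball_zero_iff.mp i.2)
    refine key.trans_eq (congrArg Complex.re (Eq.symm ?_))
    rw [← Finset.sum_sub_distrib]
    refine Finset.sum_congr rfl fun i _ => ?_
    rw [← Finset.sum_sub_distrib]
    refine Finset.sum_congr rfl fun j _ => ?_
    rw [inner_smul_left, inner_smul_right, kernel_inner_s3 S i.2 j.2]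
    have hne : 1 - (i : ℂ) * (starRingEnd ℂ) (j : ℂ) ≠ 0 := by
      have h1 : ‖(i : ℂ)‖ < 1 := mem_ball_zero_iff.mp i.2
      have h2 : ‖(j : ℂ)‖ < 1 := mem_ball_zero_iff.mp j.2
      rw [mul_comm]
      exact conj_mul_ne h2 h1.le
    have e1 : (1 - (i : ℂ) * (starRingEnd ℂ) (j : ℂ)) ^ (-((t - 1 : ℝ) : ℂ)) =
        (1 - (i : ℂ) * (starRingEnd ℂ) (j : ℂ)) *
        (1 - (i : ℂ) * (starRingEnd ℂ) (j : ℂ)) ^ (-(t : ℂ)) := by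
      have : (-((t - 1 : ℝ) : ℂ)) = 1 + (-(t : ℂ)) := by push_cast; ring
      rw [this, Complex.cpow_add _ _ hne, Complex.cpow_one]
    rw [e1]
    simp only [map_mul, Complex.conj_conj]
    linear_combination ((starRingEnd ℂ) (x i) * x j *
      (1 - (i : ℂ) * (starRingEnd ℂ) (j : ℂ)) ^ (-(t : ℂ))) * hh i i.2 j j.2
  set A := g.extendOfNorm e with hA
  have hAn : ‖A‖ ≤ 1 := LinearMap.opNorm_extendOfNorm_le (dense_kernel S) zero_le_one hb
  have hAk : ∀ w ∈ Disk, A (S.kernel w) = (starRingEnd ℂ) (χ w) • S.kernel w := by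
    intro w hw
    have := LinearMap.extendOfNorm_eq (f := g) (e := e) (dense_kernel S) ⟨1, hb⟩
      (Finsupp.single ⟨w, hw⟩ 1)
    simpa [he, hg] using this
  refine ⟨ContinuousLinearMap.adjoint A, by simpa using hAn, fun f z hz => ?_⟩
  rw [← S.reproducing _ z hz, ContinuousLinearMap.adjoint_inner_right, hAk z hz, inner_smul_left,
    Complex.conj_conj, S.reproducing _ z hz]

lemma adjoint_kernel {φ : ℂ → ℂ} (hm : MapsTo φ Disk Disk) {C : S.H →L[ℂ] S.H}
    (hC : S.IsCompositionOperator φ C) {w : ℂ} (hw : w ∈ Disk) :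
    ContinuousLinearMap.adjoint C (S.kernel w) = S.kernel (φ w) := by
  apply ext_inner_right ℂ
  intro f
  rw [ContinuousLinearMap.adjoint_inner_left, S.reproducing _ w hw, S.reproducing _ _ (hm hw), hC f w hw]

/-- normalized kernel -/
def nk (w : ℂ) : S.H := ((‖S.kernel w‖ : ℂ)⁻¹) • S.kernel w

lemma norm_nk {w : ℂ} (hw : w ∈ Disk) : ‖nk S w‖ = 1 := by
  have := norm_kernel_pos S hw
  rw [nk, norm_smul, norm_inv, Complex.norm_real, norm_norm, inv_mul_cancel₀ this.ne']

lemma multiplier_nk {χ : ℂ → ℂ} {M : S.H →L[ℂ] S.H} (hM : ‖M‖ ≤ 1)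
    (h : ∀ f, ∀ z ∈ Disk, S.eval (M f) z = χ z * S.eval f z) {w : ℂ} (hw : w ∈ Disk) :
    ‖M (nk S w) - χ w • nk S w‖ ^ 2 ≤ 1 - ‖χ w‖ ^ 2 := by
  have hn := norm_nk S hw
  have h1 : ⟪nk S w, M (nk S w)⟫ = χ w := by
    have h2 : ⟪S.kernel w, M (nk S w)⟫ = χ w * ⟪S.kernel w, nk S w⟫ := by
      rw [S.reproducing _ w hw, h _ w hw, S.reproducing _ w hw]
    have h3 : ⟪nk S w, nk S w⟫ = 1 := by
      rw [inner_self_eq_norm_sq_to_K, hn]; simp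
    have h4 : ∀ y, ⟪nk S w, y⟫ = (starRingEnd ℂ) ((‖S.kernel w‖ : ℂ)⁻¹) * ⟪S.kernel w, y⟫ := by
      intro y; rw [← inner_smul_left]; rfl
    rw [h4, h2, mul_left_comm, ← h4, h3, mul_one]
  have hle : ‖M (nk S w)‖ ≤ 1 := by
    have := M.le_of_opNorm_le hM (nk S w)
    rwa [hn, mul_one] at this
  rw [norm_sub_sq (𝕜 := ℂ), inner_smul_right, norm_smul, hn, mul_one]
  have h5 : ⟪M (nk S w), nk S w⟫ = (starRingEnd ℂ) (χ w) := by
    rw [← inner_conj_symm, h1]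
  rw [h5, Complex.mul_conj, Complex.normSq_eq_norm_sq]
  simp only [RCLike.re_eq_complex_re, Complex.ofReal_re]
  nlinarith [norm_nonneg (M (nk S w))]

lemma orth {H : Type*} [NormedAddCommGroup H] [InnerProductSpace ℂ H] [CompleteSpace H]
    (M : H →L[ℂ] H) (hM : ‖M‖ ≤ 1) (f g : ℕ → H) (B : ℝ) (hf : ∀ n, ‖f n‖ ≤ B) (hg : ∀ n, ‖g n‖ ≤ B)
    (p q : ℂ) (hp : ‖p‖ = 1) (hpq : p ≠ q)
    (h1 : Tendsto (fun n => ‖M (f n) - p • f n‖) atTop (𝓝 0))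
    (h2 : Tendsto (fun n => ‖M (g n) - q • g n‖) atTop (𝓝 0)) :
    Tendsto (fun n => ⟪f n, g n⟫) atTop (𝓝 0) := by
  set N := ContinuousLinearMap.adjoint M with hN
  have hNn : ‖N‖ ≤ 1 := by simpa [hN] using hM
  have hB : 0 ≤ B := (norm_nonneg _).trans (hf 0)
  have hpp : (starRingEnd ℂ) p * p = 1 := by
    rw [mul_comm, Complex.mul_conj, Complex.normSq_eq_norm_sq, hp]; simp
  have e1 : ∀ n, ‖N (f n) - (starRingEnd ℂ) p • f n‖ ^ 2 ≤ 2 * B * ‖M (f n) - p • f n‖ := by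
    intro n
    have a1 : ‖N (f n)‖ ≤ ‖f n‖ := by simpa using N.le_of_opNorm_le hNn (f n)
    have a2 : ⟪N (f n), (starRingEnd ℂ) p • f n⟫ =
        (starRingEnd ℂ) p * ⟪f n, M (f n) - p • f n⟫ + (‖f n‖ ^ 2 : ℝ) := by
      rw [inner_smul_right, hN, ContinuousLinearMap.adjoint_inner_left, inner_sub_right,
        inner_smul_right, inner_self_eq_norm_sq_to_K]
      push_cast
      linear_combination ((‖f n‖ : ℂ) ^ 2) * hpp
    have a3 : ‖(starRingEnd ℂ) p * ⟪f n, M (f n) - p • f n⟫‖ ≤ B * ‖M (f n) - p • f n‖ := by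
      rw [norm_mul, RCLike.norm_conj, hp, one_mul]
      exact (norm_inner_le_norm _ _).trans (mul_le_mul_of_nonneg_right (hf n) (norm_nonneg _))
    have a4 := (abs_le.mp ((Complex.abs_re_le_norm _).trans a3)).1
    rw [norm_sub_sq (𝕜 := ℂ), a2, norm_smul, RCLike.norm_conj, hp, one_mul]
    simp only [RCLike.re_eq_complex_re, Complex.add_re, Complex.ofReal_re]
    nlinarith [norm_nonneg (N (f n)), norm_nonneg (f n)]
  have t1 : Tendsto (fun n => ‖N (f n) - (starRingEnd ℂ) p • f n‖) atTop (𝓝 0) := by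
    have b1 : Tendsto (fun n => Real.sqrt (2 * B * ‖M (f n) - p • f n‖)) atTop (𝓝 0) := by
      have := (Real.continuous_sqrt.tendsto _).comp (h1.const_mul (2 * B))
      rw [mul_zero, Real.sqrt_zero] at this
      exact this
    refine squeeze_zero (fun n => norm_nonneg _) (fun n => ?_) b1
    exact Real.le_sqrt_of_sq_le (e1 n)
  have hne : 0 < ‖p - q‖ := norm_pos_iff.mpr (sub_ne_zero.mpr hpq)
  rw [tendsto_zero_iff_norm_tendsto_zero]
  have t2 : Tendsto (fun n => (B * ‖M (g n) - q • g n‖ +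
      ‖N (f n) - (starRingEnd ℂ) p • f n‖ * B) / ‖p - q‖) atTop (𝓝 0) := by
    have := ((h2.const_mul B).add (t1.mul_const B)).div_const ‖p - q‖
    simpa using this
  refine squeeze_zero (fun n => norm_nonneg _) (fun n => ?_) t2
  rw [le_div_iff₀ hne, mul_comm, ← norm_mul]
  have : (p - q) * ⟪f n, g n⟫ = ⟪f n, M (g n) - q • g n⟫ -
      ⟪N (f n) - (starRingEnd ℂ) p • f n, g n⟫ := by
    rw [inner_sub_right, inner_sub_left, inner_smul_right, inner_smul_left, Complex.conj_conj, hN,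
      ContinuousLinearMap.adjoint_inner_left]
    ring
  rw [this]
  refine (norm_sub_le _ _).trans (add_le_add ?_ ?_)
  · exact (norm_inner_le_norm _ _).trans (mul_le_mul_of_nonneg_right (hf n) (norm_nonneg _))
  · exact (norm_inner_le_norm _ _).trans (mul_le_mul_of_nonneg_left (hg n) (norm_nonneg _))

lemma inv_norm_kernel_tendsto (ht : 1 ≤ t) {u : ℕ → ℂ} (hu : ∀ n, u n ∈ Disk) {ζ : ℂ} (hζ : ‖ζ‖ = 1)
    (hlim : Tendsto u atTop (𝓝 ζ)) : Tendsto (fun n => ‖S.kernel (u n)‖⁻¹) atTop (𝓝 0) := by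
  have h1 : ∀ n, ‖S.kernel (u n)‖⁻¹ = Real.sqrt ((1 - ‖u n‖ ^ 2) ^ t) := by
    intro n
    have h := norm_kernel S (hu n)
    rw [Real.rpow_neg (disk_pos (hu n)).le] at h
    rw [eq_comm, Real.sqrt_eq_iff_mul_self_eq (Real.rpow_nonneg (disk_pos (hu n)).le _) (by positivity),
      ← sq, inv_pow, h, inv_inv]
  simp only [h1]
  have h2 : Tendsto (fun n => 1 - ‖u n‖ ^ 2) atTop (𝓝 0) := by
    have := (hlim.norm.pow 2).const_sub 1
    simpa [hζ] using this
  have h3 := (Real.continuous_sqrt.tendsto _).comp (h2.rpow_const (p := t) (Or.inr (by linarith)))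
  simpa [Function.comp_def, Real.zero_rpow (by linarith : t ≠ 0)] using h3

lemma weak_nk (ht : 1 ≤ t) {u : ℕ → ℂ} (hu : ∀ n, u n ∈ Disk) {ζ : ℂ} (hζ : ‖ζ‖ = 1)
    (hlim : Tendsto u atTop (𝓝 ζ)) (f : S.H) :
    Tendsto (fun n => ⟪f, nk S (u n)⟫) atTop (𝓝 0) := by
  have hk : ∀ w ∈ Disk, Tendsto (fun n => ⟪S.kernel w, nk S (u n)⟫) atTop (𝓝 0) := by
    intro w hw
    have h1 : ∀ n, ⟪S.kernel w, nk S (u n)⟫ =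
        ((‖S.kernel (u n)‖⁻¹ : ℝ) : ℂ) * (1 - w * (starRingEnd ℂ) (u n)) ^ (-(t : ℂ)) := by
      intro n
      rw [nk, inner_smul_right, kernel_inner_s3 S hw (hu n)]
      push_cast; rfl
    simp only [h1]
    have h2 : Tendsto (fun n => 1 - w * (starRingEnd ℂ) (u n)) atTop (𝓝 (1 - w * (starRingEnd ℂ) ζ)) :=
      (((Complex.continuous_conj.tendsto _).comp hlim).const_mul w).const_sub 1
    have h3 : 1 - w * (starRingEnd ℂ) ζ ∈ Complex.slitPlane := by
      left
      have hw' : ‖w‖ < 1 := by simpa using hw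
      have := Complex.re_le_norm (w * (starRingEnd ℂ) ζ)
      rw [norm_mul, RCLike.norm_conj, hζ, mul_one] at this
      simp only [Complex.sub_re, Complex.one_re]
      linarith
    have h4 := h2.cpow (tendsto_const_nhds (x := (-(t : ℂ)))) h3
    have h5 := (Complex.continuous_ofReal.tendsto _).comp (inv_norm_kernel_tendsto S ht hu hζ hlim)
    have := h5.mul h4
    simpa using this
  have he : ∀ x : Disk →₀ ℂ, Tendsto (fun n =>
      ⟪Finsupp.linearCombination ℂ (fun w : Disk => S.kernel w) x, nk S (u n)⟫) atTop (𝓝 0) := by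
    intro x
    simp only [Finsupp.linearCombination_apply, Finsupp.sum, sum_inner, inner_smul_left]
    have := tendsto_finsetSum x.support (fun i _ => (hk i i.2).const_mul ((starRingEnd ℂ) (x i)))
    simpa using this
  rw [Metric.tendsto_atTop]
  intro ε hε
  obtain ⟨x, hx⟩ := (dense_kernel S).exists_dist_lt f (half_pos hε)
  obtain ⟨N, hN⟩ := (Metric.tendsto_atTop.mp (he x)) (ε / 2) (half_pos hε)
  refine ⟨N, fun n hn => ?_⟩
  have h1 := hN n hn
  rw [dist_zero_right] at h1 ⊢
  rw [dist_eq_norm] at hx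
  set y := Finsupp.linearCombination ℂ (fun w : Disk => S.kernel w) x
  have h2 : ⟪f, nk S (u n)⟫ = ⟪f - y, nk S (u n)⟫ + ⟪y, nk S (u n)⟫ := by
    rw [← inner_add_left, sub_add_cancel]
  rw [h2]
  have h3 := norm_inner_le_norm (𝕜 := ℂ) (f - y) (nk S (u n))
  rw [norm_nk S (hu n), mul_one] at h3
  have := norm_add_le (⟪f - y, nk S (u n)⟫) (⟪y, nk S (u n)⟫)
  linarith

lemma compact_weak {H : Type*} [NormedAddCommGroup H] [InnerProductSpace ℂ H] [CompleteSpace H]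
    (T : H →L[ℂ] H) (hT : IsCompactOperator T) (x : ℕ → H) (hx : ∀ n, ‖x n‖ = 1)
    (hw : ∀ f, Tendsto (fun n => ⟪f, x n⟫) atTop (𝓝 0)) :
    ∃ k : ℕ → ℕ, StrictMono k ∧ Tendsto (fun n => T (x (k n))) atTop (𝓝 0) := by
  have hc := hT.isCompact_closure_image_closedBall (f := T.toLinearMap) 1
  obtain ⟨y, -, k, hk, hlim⟩ := hc.tendsto_subseq (x := fun n => T (x n))
    (fun n => subset_closure ⟨x n, by simp [hx n], rfl⟩)
  refine ⟨k, hk, ?_⟩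
  have hy : y = 0 := by
    have h1 : Tendsto (fun n => ⟪y, T (x (k n))⟫) atTop (𝓝 ⟪y, y⟫) :=
      tendsto_const_nhds.inner hlim
    have h2 : Tendsto (fun n => ⟪y, T (x (k n))⟫) atTop (𝓝 0) := by
      have := (hw (ContinuousLinearMap.adjoint T y)).comp hk.tendsto_atTop
      simpa [Function.comp_def, ContinuousLinearMap.adjoint_inner_left] using this
    exact inner_self_eq_zero.mp (tendsto_nhds_unique h1 h2)
  rw [← hy]
  exact hlim

/-- Images of normalized kernels under composition operators are approximate eigenvectors of `M_z`. -/
lemma approx_eig (ht : 1 ≤ t) {φ χ : ℂ → ℂ} (hφm : MapsTo φ Disk Disk) (hχ : IsDiskAutomorphism χ)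
    (hχφ : ∀ z ∈ Disk, χ (φ z) = z) {C : S.H →L[ℂ] S.H} (hC : S.IsCompositionOperator φ C)
    {M : S.H →L[ℂ] S.H} (hM : ∀ f, ∀ z ∈ Disk, S.eval (M f) z = z * S.eval f z)
    {u : ℕ → ℂ} (hu : ∀ n, u n ∈ Disk) {p : ℂ} (hp : ‖p‖ = 1)
    (hlim : Tendsto (fun n => χ (u n)) atTop (𝓝 p)) :
    Tendsto (fun n => ‖M (C (nk S (u n))) - p • C (nk S (u n))‖) atTop (𝓝 0) := by
  obtain ⟨L, hL, hLe⟩ := multiplier S ht hχ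
  have hMC : ∀ f, M (C f) = C (L f) := by
    intro f
    apply S.eval_injective
    intro z hz
    rw [hM _ z hz, hC _ z hz, hC _ z hz, hLe _ _ (hφm hz), hχφ z hz]
  have h1 : Tendsto (fun n => ‖C‖ * Real.sqrt (1 - ‖χ (u n)‖ ^ 2) + ‖χ (u n) - p‖ * ‖C‖) atTop (𝓝 0) := by
    have a1 := (Real.continuous_sqrt.tendsto _).comp ((hlim.norm.pow 2).const_sub 1)
    have a2 := (hlim.sub_const p).norm
    have := (a1.const_mul ‖C‖).add (a2.mul_const ‖C‖)
    simpa [hp] using this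
  refine squeeze_zero (fun n => norm_nonneg _) (fun n => ?_) h1
  have e : M (C (nk S (u n))) - p • C (nk S (u n)) =
      C (L (nk S (u n)) - χ (u n) • nk S (u n)) + (χ (u n) - p) • C (nk S (u n)) := by
    rw [hMC, map_sub, map_smul, sub_smul]; abel
  rw [e]
  refine (norm_add_le _ _).trans (add_le_add ?_ ?_)
  · refine (C.le_opNorm _).trans (mul_le_mul_of_nonneg_left ?_ (norm_nonneg _))
    exact Real.le_sqrt_of_sq_le (multiplier_nk S hL hLe (hu n))
  · rw [norm_smul]
    refine mul_le_mul_of_nonneg_left ?_ (norm_nonneg _)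
    simpa [norm_nk S (hu n)] using C.le_opNorm (nk S (u n))

/-- `‖K_{φ w}‖` is bounded below by a multiple of `‖K_w‖`. -/
lemma kernel_lower (ht : 1 ≤ t) {φ : ℂ → ℂ} (hφ : IsDiskAutomorphism φ) :
    ∃ c > 0, ∀ w ∈ Disk, c * ‖S.kernel w‖ ≤ ‖S.kernel (φ w)‖ := by
  obtain ⟨c, hc, h⟩ := aut_bound hφ
  refine ⟨Real.sqrt (c ^ t), Real.sqrt_pos.mpr (Real.rpow_pos_of_pos hc t), fun w hw => ?_⟩
  apply (sq_le_sq₀ (by positivity) (norm_nonneg _)).mp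
  have hφw := hφ.2.1 hw
  rw [mul_pow, Real.sq_sqrt (Real.rpow_nonneg hc.le t), norm_kernel S hw, norm_kernel S hφw]
  have p1 := disk_pos hw
  have p2 := disk_pos hφw
  rw [Real.rpow_neg p1.le, Real.rpow_neg p2.le, ← div_eq_mul_inv, div_le_iff₀ (Real.rpow_pos_of_pos p1 t),
    inv_mul_eq_div, le_div_iff₀ (Real.rpow_pos_of_pos p2 t), ← Real.mul_rpow hc.le p2.le]
  exact Real.rpow_le_rpow (by positivity) (h w hw) (by linarith)

end Aux

/-- Let `φ, ψ` be automorphisms of the unit disk `D`.  If the commutator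
`[C_ψ*, C_φ] = C_ψ* C_φ - C_φ C_ψ*` is compact on the Hardy space `H²(D)` (`t = 1`) or on a
weighted Bergman space `A²_s(D)` (`t = s + 2` for some `s > -1`), then `φ ∘ ψ = ψ ∘ φ`. -/
theorem commute_of_commutator_compact_disk
    (t : ℝ) (ht : t = 1 ∨ ∃ s : ℝ, -1 < s ∧ t = s + 2)
    (S : DiskKernelSpace t)
    (φ ψ : ℂ → ℂ)
    (hφ : IsDiskAutomorphism φ) (hψ : IsDiskAutomorphism ψ)
    (Cφ Cψ : S.H →L[ℂ] S.H)
    (hCφ : S.IsCompositionOperator φ Cφ) (hCψ : S.IsCompositionOperator ψ Cψ)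
    (hcpt : IsCompactOperator
      ⇑((ContinuousLinearMap.adjoint Cψ).comp Cφ - Cφ.comp (ContinuousLinearMap.adjoint Cψ))) :
    ∀ z ∈ Disk, φ (ψ z) = ψ (φ z) := by
  have ht1 : 1 ≤ t := by
    rcases ht with h | ⟨s, hs, h⟩ <;> linarith
  have hφ' := hφ
  have hψ' := hψ
  obtain ⟨hφd, hφm, χ, hχd, hχm, hχφ, hφχ⟩ := hφ'
  obtain ⟨hψd, hψm, η, hηd, hηm, hηψ, hψη⟩ := hψ'
  have hχ : IsDiskAutomorphism χ := ⟨hχd, hχm, φ, hφd, hφm, hφχ, hχφ⟩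
  have hη : IsDiskAutomorphism η := ⟨hηd, hηm, ψ, hψd, hψm, hψη, hηψ⟩
  have hF : IsDiskAutomorphism (fun z => η (χ (ψ z))) := aut_comp hη (aut_comp hχ hψ)
  obtain ⟨m1, hm1, hm1e, hm1n⟩ := aut_ext hχ
  obtain ⟨m2, hm2, hm2e, hm2n⟩ := aut_ext hF
  by_contra hcon
  push Not at hcon
  obtain ⟨z0, hz0, hne⟩ := hcon
  have hex : ∃ ζ : ℂ, ‖ζ‖ = 1 ∧ m1 ζ ≠ m2 ζ := by
    by_contra hall
    push Not at hall
    apply hne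
    have heq := Complex.eqOn_of_eqOn_frontier Metric.isBounded_ball hm1 hm2 (fun z hz => hall z (by
      rw [frontier_ball _ one_ne_zero] at hz
      simpa using hz))
    have h1 := heq (hφm hz0)
    rw [← hm1e _ (hφm hz0), ← hm2e _ (hφm hz0), hχφ z0 hz0] at h1
    have h2 := congrArg ψ h1
    rw [hψη _ (hχm (hψm (hφm hz0)))] at h2
    rw [h2, hφχ _ (hψm (hφm hz0))]
  obtain ⟨ζ, hζ, hζne⟩ := hex
  -- the approximating sequence
  obtain ⟨u, hu, hlim⟩ : ∃ u : ℕ → ℂ, (∀ n, u n ∈ Disk) ∧ Tendsto u atTop (𝓝 ζ) := by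
    have : ζ ∈ closure Disk := by
      rw [closure_ball _ one_ne_zero]; simp [hζ]
    exact mem_closure_iff_seq_limit.mp this
  obtain ⟨k, hk, hT⟩ := compact_weak _ hcpt (fun n => nk S (u n)) (fun n => norm_nk S (hu n))
    (weak_nk S ht1 hu hζ hlim)
  -- pass to the subsequence
  generalize hv : (fun n => u (k n)) = x
  have hx : ∀ n, x n ∈ Disk := fun n => by rw [← hv]; exact hu _
  have hxlim : Tendsto x atTop (𝓝 ζ) := by rw [← hv]; exact hlim.comp hk.tendsto_atTop
  have hTx : Tendsto (fun n => ((ContinuousLinearMap.adjoint Cψ).comp Cφ -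
      Cφ.comp (ContinuousLinearMap.adjoint Cψ)) (nk S (x n))) atTop (𝓝 0) := by
    rw [← hv]; exact hT
  have hxw : Tendsto x atTop (𝓝[closure Disk] ζ) :=
    tendsto_nhdsWithin_iff.mpr ⟨hxlim, Eventually.of_forall fun n => subset_closure (hx n)⟩
  have hζc : ζ ∈ closure Disk := by
    rw [closure_ball _ one_ne_zero]; simp [hζ]
  have hl1 : Tendsto (fun n => χ (x n)) atTop (𝓝 (m1 ζ)) := by
    have := (hm1.continuousOn ζ hζc).tendsto.comp hxw
    refine this.congr fun n => ?_
    simp [hm1e _ (hx n)]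
  have hl2 : Tendsto (fun n => η (χ (ψ (x n)))) atTop (𝓝 (m2 ζ)) := by
    have := (hm2.continuousOn ζ hζc).tendsto.comp hxw
    refine this.congr fun n => ?_
    have h := hm2e _ (hx n)
    simp only [Function.comp_apply]
    exact h.symm
  have hy : ∀ n, χ (ψ (x n)) ∈ Disk := fun n => hχm (hψm (hx n))
  obtain ⟨M, hM, hMe⟩ := multiplier S ht1 aut_id
  have hf := approx_eig S ht1 hφm hχ hχφ hCφ hMe hx (hm1n ζ hζ) hl1
  have hg := approx_eig S ht1 hψm hη hηψ hCψ hMe hy (hm2n ζ hζ) hl2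
  have horth := orth M hM (fun n => Cψ (nk S (χ (ψ (x n))))) (fun n => Cφ (nk S (x n)))
    (max ‖Cφ‖ ‖Cψ‖)
    (fun n => by
      have := Cψ.le_opNorm (nk S (χ (ψ (x n))))
      rw [norm_nk S (hy n), mul_one] at this
      exact this.trans (le_max_right _ _))
    (fun n => by
      have := Cφ.le_opNorm (nk S (x n))
      rw [norm_nk S (hx n), mul_one] at this
      exact this.trans (le_max_left _ _))
    _ _ (hm2n ζ hζ) hζne.symm hg hf
  have hinner : Tendsto (fun n => ⟪nk S (χ (ψ (x n))), ((ContinuousLinearMap.adjoint Cψ).comp Cφ -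
      Cφ.comp (ContinuousLinearMap.adjoint Cψ)) (nk S (x n))⟫) atTop (𝓝 0) := by
    rw [tendsto_zero_iff_norm_tendsto_zero] at hTx ⊢
    refine squeeze_zero (fun n => norm_nonneg _) (fun n => ?_) hTx
    have := norm_inner_le_norm (𝕜 := ℂ) (nk S (χ (ψ (x n)))) (((ContinuousLinearMap.adjoint Cψ).comp Cφ -
      Cφ.comp (ContinuousLinearMap.adjoint Cψ)) (nk S (x n)))
    rwa [norm_nk S (hy n), one_mul] at this
  obtain ⟨c1, hc1, hlow1⟩ := kernel_lower S ht1 hφ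
  obtain ⟨c2, hc2, hlow2⟩ := kernel_lower S ht1 hψ
  have hdiff := (horth.sub hinner).norm
  simp only [sub_zero, norm_zero] at hdiff
  have hge : ∀ n, c1 * c2 ≤ ‖⟪Cψ (nk S (χ (ψ (x n)))), Cφ (nk S (x n))⟫ -
      ⟪nk S (χ (ψ (x n))), ((ContinuousLinearMap.adjoint Cψ).comp Cφ -
      Cφ.comp (ContinuousLinearMap.adjoint Cψ)) (nk S (x n))⟫‖ := by
    intro n
    have e1 : ⟪Cψ (nk S (χ (ψ (x n)))), Cφ (nk S (x n))⟫ -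
      ⟪nk S (χ (ψ (x n))), ((ContinuousLinearMap.adjoint Cψ).comp Cφ -
      Cφ.comp (ContinuousLinearMap.adjoint Cψ)) (nk S (x n))⟫ =
      ⟪ContinuousLinearMap.adjoint Cφ (nk S (χ (ψ (x n)))),
        ContinuousLinearMap.adjoint Cψ (nk S (x n))⟫ := by
      rw [sub_apply, ContinuousLinearMap.comp_apply,
        ContinuousLinearMap.comp_apply, inner_sub_right, ContinuousLinearMap.adjoint_inner_right,
        ContinuousLinearMap.adjoint_inner_left]
      ring
    have e2 : ContinuousLinearMap.adjoint Cφ (nk S (χ (ψ (x n)))) =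
        ((‖S.kernel (χ (ψ (x n)))‖ : ℂ)⁻¹) • S.kernel (ψ (x n)) := by
      rw [nk, map_smul, adjoint_kernel S hφm hCφ (hy n), hφχ _ (hψm (hx n))]
    have e3 : ContinuousLinearMap.adjoint Cψ (nk S (x n)) =
        ((‖S.kernel (x n)‖ : ℂ)⁻¹) • S.kernel (ψ (x n)) := by
      rw [nk, map_smul, adjoint_kernel S hψm hCψ (hx n)]
    have l1 := hlow1 _ (hy n)
    rw [hφχ _ (hψm (hx n))] at l1
    have l2 := hlow2 _ (hx n)
    have p1 := norm_kernel_pos S (hy n)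
    have p2 := norm_kernel_pos S (hx n)
    rw [e1, e2, e3, inner_smul_left, inner_smul_right, norm_mul, norm_mul,
      inner_self_eq_norm_sq_to_K]
    simp only [RCLike.norm_conj, norm_inv, Complex.norm_real, norm_norm, norm_pow, Complex.coe_algebraMap]
    rw [← mul_assoc, ← mul_inv, inv_mul_eq_div, le_div_iff₀ (by positivity)]
    have := mul_le_mul l1 l2 (by positivity) (norm_nonneg _)
    nlinarith
  have := ge_of_tendsto' hdiff hge
  have : 0 < c1 * c2 := by positivity
  linarith
end
end

section
/- Let φ and ψ be automorphisms of the unit ball B_N of C^N. If the commutator [C_ψ*, C_φ] = C_ψ* C_φ − C_φ C_ψ* is compact on H^2(B_N), or on A^2_s(B_N) for some s > −1, then φ∘ψ = ψ∘φ. -/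
open Filter MeasureTheory Metric Set
open scoped ComplexInnerProductSpace Topology

noncomputable section

/-- `φ` is an automorphism (biholomorphic self-map) of the unit ball `B_N`. -/
def IsBallAutomorphism (N : ℕ) (φ : EuclideanSpace ℂ (Fin N) → EuclideanSpace ℂ (Fin N)) : Prop :=
  DifferentiableOn ℂ φ (Ball N) ∧ Set.MapsTo φ (Ball N) (Ball N) ∧
    ∃ ψ : EuclideanSpace ℂ (Fin N) → EuclideanSpace ℂ (Fin N),
      DifferentiableOn ℂ ψ (Ball N) ∧ Set.MapsTo ψ (Ball N) (Ball N) ∧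
      (∀ z ∈ Ball N, ψ (φ z) = z) ∧ (∀ z ∈ Ball N, φ (ψ z) = z)

namespace BallAux
section geom
variable {E : Type*} [NormedAddCommGroup E] [InnerProductSpace ℂ E]

/-- `√(1-|a|²)`. -/
def sa (a : E) : ℝ := Real.sqrt (1 - ‖a‖ ^ 2)

/-- The Möbius involution exchanging `0` and `a`. -/
def mob (a z : E) : E :=
  (1 - ⟪a, z⟫)⁻¹ • (a - (sa a : ℂ) • z - (⟪a, z⟫ / (1 + (sa a : ℂ))) • a)

lemma sa_pos {a : E} (ha : ‖a‖ < 1) : 0 < sa a := by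
  unfold sa
  apply Real.sqrt_pos.mpr
  nlinarith [norm_nonneg a]

lemma sa_sq {a : E} (ha : ‖a‖ < 1) : (sa a) ^ 2 = 1 - ‖a‖ ^ 2 := by
  unfold sa
  apply Real.sq_sqrt
  nlinarith [norm_nonneg a]

lemma one_add_sa_ne {a : E} (ha : ‖a‖ < 1) : (1 + (sa a : ℂ)) ≠ 0 := by
  have := sa_pos ha
  exact_mod_cast (by positivity : (1 + sa a) ≠ 0)

lemma inner_self_sa {a : E} (ha : ‖a‖ < 1) : ⟪a, a⟫ = 1 - (sa a : ℂ) ^ 2 := by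
  have h := sa_sq ha
  rw [inner_self_eq_norm_sq_to_K]
  have : ((sa a : ℂ)) ^ 2 = 1 - (‖a‖ : ℂ) ^ 2 := by exact_mod_cast congrArg (fun x : ℝ => (x : ℂ)) h
  rw [this]; simp

lemma norm_inner_lt {a z : E} (hz : ‖z‖ ≤ 1) : ‖⟪a, z⟫‖ ≤ ‖a‖ := by
  refine (norm_inner_le_norm a z).trans ?_
  nlinarith [norm_nonneg a]

lemma den_ne {a z : E} (ha : ‖a‖ < 1) (hz : ‖z‖ ≤ 1) : (1 - ⟪a, z⟫) ≠ 0 := by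
  intro h
  have h1 : ⟪a, z⟫ = 1 := (sub_eq_zero.mp h).symm
  have := norm_inner_lt (a := a) hz
  rw [h1] at this
  simp at this
  linarith

lemma den_ne' {a z : E} (ha : ‖a‖ < 1) (hz : ‖z‖ ≤ 1) : (1 - ⟪z, a⟫) ≠ 0 := by
  intro h
  apply den_ne ha hz
  have h2 := congrArg (starRingEnd ℂ) h
  simpa using h2

lemma mob_formula {a z w : E} (ha : ‖a‖ < 1) (hz : ‖z‖ ≤ 1) (hw : ‖w‖ ≤ 1) :
    (1 - ⟪mob a w, mob a z⟫) * ((1 - ⟪a, z⟫) * (1 - ⟪w, a⟫)) =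
      ((1 - ‖a‖ ^ 2 : ℝ) : ℂ) * (1 - ⟪w, z⟫) := by
  have h1 := den_ne ha hz
  have h2 := den_ne' ha hw
  have h3 := one_add_sa_ne ha
  rw [← sa_sq ha]
  unfold mob
  simp only [inner_smul_left, inner_smul_right, inner_sub_left, inner_sub_right, map_inv₀, map_sub,
    map_one, inner_conj_symm, map_div₀, map_add, Complex.conj_ofReal, inner_self_sa ha]
  push_cast
  field_simp
  ring

lemma inner_mob {a z : E} (ha : ‖a‖ < 1) (hz : ‖z‖ ≤ 1) :
    (1 - ⟪a, mob a z⟫) * (1 - ⟪a, z⟫) = (sa a : ℂ) ^ 2 := by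
  have h1 := den_ne ha hz
  have h3 := one_add_sa_ne ha
  unfold mob
  simp only [inner_smul_right, inner_sub_right, inner_self_sa ha]
  field_simp
  ring

lemma mob_mob {a z : E} (ha : ‖a‖ < 1) (hz : ‖z‖ ≤ 1) : mob a (mob a z) = z := by
  have h1 := den_ne ha hz
  have h3 := one_add_sa_ne ha
  have hs : (sa a : ℂ) ≠ 0 := by exact_mod_cast (sa_pos ha).ne'
  have h4 := inner_mob ha hz
  have h5 : (1 - ⟪a, mob a z⟫) = (sa a : ℂ) ^ 2 / (1 - ⟪a, z⟫) := by
    field_simp; exact h4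
  have h6 : ⟪a, mob a z⟫ = 1 - (sa a : ℂ) ^ 2 / (1 - ⟪a, z⟫) := by rw [← h5]; ring
  conv_lhs => rw [mob]
  rw [h5, h6]
  unfold mob
  match_scalars
  · field_simp
    ring
  · field_simp

lemma mob_norm {a z : E} (ha : ‖a‖ < 1) (hz : ‖z‖ ≤ 1) :
    (1 - ‖mob a z‖ ^ 2) * ‖1 - ⟪a, z⟫‖ ^ 2 = (1 - ‖a‖ ^ 2) * (1 - ‖z‖ ^ 2) := by
  have h := mob_formula ha hz hz
  have h2 : (1 - ⟪a, z⟫) * (1 - ⟪z, a⟫) = ((‖1 - ⟪a, z⟫‖ ^ 2 : ℝ) : ℂ) := by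
    have : (1 - ⟪z, a⟫) = (starRingEnd ℂ) (1 - ⟪a, z⟫) := by simp
    rw [this, Complex.mul_conj, Complex.normSq_eq_norm_sq]
  rw [h2, inner_self_eq_norm_sq_to_K, inner_self_eq_norm_sq_to_K] at h
  have h' : ((((1 - ‖mob a z‖ ^ 2) * ‖1 - ⟪a, z⟫‖ ^ 2 : ℝ)) : ℂ) =
      (((1 - ‖a‖ ^ 2) * (1 - ‖z‖ ^ 2) : ℝ) : ℂ) := by
    push_cast
    push_cast at h
    exact h
  exact_mod_cast h'

lemma mob_ball {a z : E} (ha : ‖a‖ < 1) (hz : ‖z‖ < 1) : ‖mob a z‖ < 1 := by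
  have h := mob_norm ha hz.le
  have h1 : 0 < ‖1 - ⟪a, z⟫‖ := norm_pos_iff.mpr (den_ne ha hz.le)
  have h2 : 0 < (1 - ‖a‖ ^ 2) * (1 - ‖z‖ ^ 2) := by
    apply mul_pos <;> nlinarith [norm_nonneg a, norm_nonneg z]
  rw [← h] at h2
  have h3 := pos_of_mul_pos_left h2 (by positivity)
  nlinarith [norm_nonneg (mob a z)]

lemma mob_sphere {a z : E} (ha : ‖a‖ < 1) (hz : ‖z‖ = 1) : ‖mob a z‖ = 1 := by
  have h := mob_norm ha hz.le
  have h1 : 0 < ‖1 - ⟪a, z⟫‖ := norm_pos_iff.mpr (den_ne ha hz.le)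
  rw [hz] at h
  have h2 : (1 - ‖mob a z‖ ^ 2) = 0 := by
    have : (1 - ‖mob a z‖ ^ 2) * ‖1 - ⟪a, z⟫‖ ^ 2 = 0 := by rw [h]; ring
    rcases mul_eq_zero.mp this with h | h
    · exact h
    · exact absurd h (by positivity)
  nlinarith [norm_nonneg (mob a z), sq_nonneg (‖mob a z‖ - 1)]

lemma mob_diff {a : E} (ha : ‖a‖ < 1) : DifferentiableOn ℂ (mob a) (ball 0 1) := by
  intro z hz
  have hz' : ‖z‖ < 1 := by simpa using hz
  have h1 := den_ne ha hz'.le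
  have hi : DifferentiableAt ℂ (fun z : E => ⟪a, z⟫) z := (innerSL ℂ a).differentiableAt
  unfold mob
  apply DifferentiableAt.differentiableWithinAt
  apply DifferentiableAt.smul
  · exact (hi.const_sub 1).inv h1
  · apply DifferentiableAt.sub
    · fun_prop
    · have h5 : DifferentiableAt ℂ (fun z : E => ⟪a, z⟫ / (1 + (sa a : ℂ))) z := by
        simp only [div_eq_mul_inv]
        exact hi.mul_const _
      exact h5.smul_const _

lemma mob_cont {a : E} (ha : ‖a‖ < 1) : ContinuousOn (mob a) (closedBall 0 1) := by
  intro z hz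
  have hz' : ‖z‖ ≤ 1 := by simpa using hz
  have h1 := den_ne ha hz'
  unfold mob
  apply ContinuousAt.continuousWithinAt
  apply ContinuousAt.smul
  · have h5 : ContinuousAt (fun z : E => 1 - ⟪a, z⟫) z := by fun_prop
    exact h5.inv₀ h1
  · fun_prop

lemma mob_zero (a : E) : mob a 0 = a := by simp [mob]
lemma mob_self {a : E} (ha : ‖a‖ < 1) : mob a a = 0 := by
  conv_lhs => rw [← mob_zero a]
  have := mob_mob (z := (0:E)) ha (by simp)
  rw [mob_zero] at this ⊢
  exact this

/-- Automorphism fixing the origin is homogeneous. -/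
lemma homog {f : E → E} (hf : DifferentiableOn ℂ f (ball 0 1)) (h0 : f 0 = 0)
    (hn : ∀ z, ‖z‖ < 1 → ‖f z‖ = ‖z‖) :
    ∀ z, ‖z‖ < 1 → f z = fderiv ℂ f 0 z := by
  intro z hz
  rcases eq_or_ne z 0 with rfl | hz0
  · simp [h0]
  have hzn : ‖z‖ ≠ 0 := norm_ne_zero_iff.mpr hz0
  have hznC : (‖z‖ : ℂ) ≠ 0 := by exact_mod_cast hzn
  set e : E := ((‖z‖ : ℂ)⁻¹) • z with he
  have hen : ‖e‖ = 1 := by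
    rw [he, norm_smul]; simp [hzn]
  have hze : z = (‖z‖ : ℂ) • e := by
    rw [he, smul_smul, mul_inv_cancel₀ hznC, one_smul]
  set h : ℂ → E := fun l => f (l • e) with hh
  have hle : ∀ l : ℂ, ‖l • e‖ = ‖l‖ := fun l => by rw [norm_smul, hen, mul_one]
  have hmap : MapsTo (fun l : ℂ => l • e) (ball 0 1) (ball 0 1) := by
    intro l hl
    simp only [mem_ball_zero_iff] at hl ⊢
    rwa [hle]
  have hd : DifferentiableOn ℂ h (ball 0 1) := by
    apply hf.comp _ hmap
    fun_prop
  have hh0 : h 0 = 0 := by simp [hh, h0]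
  have hm : MapsTo h (ball 0 1) (closedBall (h 0) 1) := by
    intro l hl
    rw [hh0]
    simp only [mem_ball_zero_iff, mem_closedBall_zero_iff] at hl ⊢
    rw [hh]; simp only []
    rw [hn _ (by rw [hle]; exact hl), hle]; exact hl.le
  have hz1 : (‖z‖ : ℂ) ∈ ball (0:ℂ) 1 := by simpa using hz
  have : StrictConvexSpace ℝ E := by
    let _ := InnerProductSpace.rclikeToReal ℂ E
    infer_instance
  have haff := Complex.affine_of_mapsTo_ball_of_norm_dslope_eq_div (z₀ := (‖z‖ : ℂ)) hd hm hz1 (by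
    rw [dslope_of_ne _ hznC, slope_def_module, hh0, sub_zero, sub_zero, norm_smul]
    rw [hh]; simp only []
    rw [hn _ (by rw [hle]; simpa using hz), hle]
    simp [hzn])
  set v := dslope h 0 (‖z‖ : ℂ)
  have h1 : ∀ l ∈ ball (0:ℂ) 1, h l = l • v := by
    intro l hl
    have := haff hl
    simpa [hh0] using this
  -- derivative at zero
  have hD : HasDerivAt h v 0 := by
    have : HasDerivAt (fun l : ℂ => l • v) v 0 := by
      simpa using (hasDerivAt_id (0:ℂ)).smul_const v
    apply this.congr_of_eventuallyEq
    filter_upwards [ball_mem_nhds (0:ℂ) one_pos] with l hl using h1 l hl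
  have hD2 : HasDerivAt h (fderiv ℂ f 0 e) 0 := by
    have hf0 : HasFDerivAt f (fderiv ℂ f 0) ((0:ℂ) • e) := by
      rw [zero_smul]
      exact (hf.differentiableAt (ball_mem_nhds 0 one_pos)).hasFDerivAt
    have h3 : HasDerivAt (fun l : ℂ => l • e) e 0 := by
      simpa using (hasDerivAt_id (0:ℂ)).smul_const e
    exact hf0.comp_hasDerivAt 0 h3
  have hv : v = fderiv ℂ f 0 e := hD.unique hD2
  have h4 := h1 _ hz1
  rw [hh] at h4
  simp only [] at h4
  rw [hv, ← map_smul, ← hze] at h4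
  exact h4


lemma aut_linear [FiniteDimensional ℂ E] {φ φ' : E → E}
    (hd : DifferentiableOn ℂ φ (ball 0 1)) (hm : MapsTo φ (ball 0 1) (ball 0 1))
    (hd' : DifferentiableOn ℂ φ' (ball 0 1)) (hm' : MapsTo φ' (ball 0 1) (ball 0 1))
    (h1 : ∀ z ∈ ball (0 : E) 1, φ' (φ z) = z) (h2 : ∀ z ∈ ball (0 : E) 1, φ (φ' z) = z) :
    ∃ U : E ≃ₗᵢ[ℂ] E, ∀ z, ‖z‖ < 1 → φ z = U (mob (φ' 0) z) := by
  set a := φ' 0 with hadef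
  have h00 : (0 : E) ∈ ball (0 : E) 1 := mem_ball_self one_pos
  have ha : ‖a‖ < 1 := by simpa using hm' h00
  have hmob : MapsTo (mob a) (ball 0 1) (ball 0 1) := by
    intro z hz
    simp only [mem_ball_zero_iff] at hz ⊢
    exact mob_ball ha hz
  set f : E → E := φ ∘ mob a with hf
  set g : E → E := mob a ∘ φ' with hg
  have hfd : DifferentiableOn ℂ f (ball 0 1) := hd.comp (mob_diff ha) hmob
  have hgd : DifferentiableOn ℂ g (ball 0 1) := (mob_diff ha).comp hd' hm'
  have hfm : MapsTo f (ball 0 1) (ball 0 1) := hm.comp hmob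
  have hgm : MapsTo g (ball 0 1) (ball 0 1) := hmob.comp hm'
  have hf0 : f 0 = 0 := by
    simp only [hf, Function.comp, mob_zero]
    exact h2 0 h00
  have hg0 : g 0 = 0 := by
    simp only [hg, Function.comp]
    rw [← hadef]; exact mob_self ha
  have hgf : ∀ z, ‖z‖ < 1 → g (f z) = z := by
    intro z hz
    simp only [hf, hg, Function.comp]
    rw [h1 _ (hmob (by simpa using hz)), mob_mob ha hz.le]
  have hnorm : ∀ z, ‖z‖ < 1 → ‖f z‖ = ‖z‖ := by
    intro z hz
    apply le_antisymm
    · exact Complex.norm_le_norm_of_mapsTo_ball hfd (hfm.mono_right ball_subset_closedBall) hf0 hz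
    · have hfz : ‖f z‖ < 1 := by simpa using hfm (by simpa using hz : z ∈ ball (0 : E) 1)
      have := Complex.norm_le_norm_of_mapsTo_ball hgd (hgm.mono_right ball_subset_closedBall) hg0 hfz
      rwa [hgf z hz] at this
  have hlin := homog hfd hf0 hnorm
  set L := fderiv ℂ f 0
  have hLn : ∀ z, ‖L z‖ = ‖z‖ := by
    intro z
    set c : ℝ := (1 + ‖z‖)⁻¹ with hc
    have hcpos : 0 < c := by positivity
    have hcz : ‖(c : ℂ) • z‖ < 1 := by
      rw [norm_smul, Complex.norm_real, Real.norm_eq_abs, abs_of_pos hcpos, hc]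
      rw [inv_mul_lt_iff₀ (by positivity)]; linarith
    have h5 := hnorm _ hcz
    rw [hlin _ hcz, map_smul, norm_smul, norm_smul] at h5
    have : ‖(c : ℂ)‖ ≠ 0 := by simp [hcpos.ne']
    exact mul_left_cancel₀ this h5
  let Li : E →ₗᵢ[ℂ] E := ⟨L.toLinearMap, hLn⟩
  refine ⟨Li.toLinearIsometryEquiv rfl, fun z hz => ?_⟩
  have h6 := hlin (mob a z) (mob_ball ha hz)
  simp only [hf, Function.comp, mob_mob ha hz.le] at h6
  rw [h6]
  rfl

/-- Data of the extension of a ball automorphism to the closed ball. -/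
structure ExtAut (φ : E → E) where
  a : E
  ha : ‖a‖ < 1
  Φ : E → E
  Φ' : E → E
  eq : ∀ z, ‖z‖ < 1 → φ z = Φ z
  cont : ContinuousOn Φ (closedBall 0 1)
  ball : ∀ z, ‖z‖ < 1 → ‖Φ z‖ < 1
  ball' : ∀ z, ‖z‖ < 1 → ‖Φ' z‖ < 1
  sph : ∀ z, ‖z‖ = 1 → ‖Φ z‖ = 1
  sph' : ∀ z, ‖z‖ = 1 → ‖Φ' z‖ = 1
  right_inv : ∀ z, ‖z‖ ≤ 1 → Φ (Φ' z) = z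
  left_inv : ∀ z, ‖z‖ ≤ 1 → Φ' (Φ z) = z
  formula : ∀ w z, ‖w‖ ≤ 1 → ‖z‖ ≤ 1 → (1 - ⟪Φ w, Φ z⟫) * ((1 - ⟪a, z⟫) * (1 - ⟪w, a⟫)) =
      ((1 - ‖a‖ ^ 2 : ℝ) : ℂ) * (1 - ⟪w, z⟫)
  normf : ∀ z, ‖z‖ ≤ 1 → (1 - ‖Φ z‖ ^ 2) * ‖1 - ⟪a, z⟫‖ ^ 2 = (1 - ‖a‖ ^ 2) * (1 - ‖z‖ ^ 2)

lemma exists_extAut [FiniteDimensional ℂ E] {φ φ' : E → E}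
    (hd : DifferentiableOn ℂ φ (ball 0 1)) (hm : MapsTo φ (ball 0 1) (ball 0 1))
    (hd' : DifferentiableOn ℂ φ' (ball 0 1)) (hm' : MapsTo φ' (ball 0 1) (ball 0 1))
    (h1 : ∀ z ∈ ball (0 : E) 1, φ' (φ z) = z) (h2 : ∀ z ∈ ball (0 : E) 1, φ (φ' z) = z) :
    Nonempty (ExtAut φ) := by
  obtain ⟨U, hU⟩ := aut_linear hd hm hd' hm' h1 h2
  have ha : ‖φ' 0‖ < 1 := by simpa using hm' (mem_ball_self one_pos)
  refine ⟨⟨φ' 0, ha, fun z => U (mob (φ' 0) z), fun z => mob (φ' 0) (U.symm z), hU, ?_, ?_, ?_, ?_,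
    ?_, ?_, ?_, ?_, ?_⟩⟩
  · exact U.continuous.comp_continuousOn (mob_cont ha)
  · intro z hz; rw [U.norm_map]; exact mob_ball ha hz
  · intro z hz; apply mob_ball ha; rwa [U.symm.norm_map]
  · intro z hz; rw [U.norm_map]; exact mob_sphere ha hz
  · intro z hz; apply mob_sphere ha; rwa [U.symm.norm_map]
  · intro z hz
    rw [mob_mob ha (by rwa [U.symm.norm_map]), U.apply_symm_apply]
  · intro z hz
    rw [U.symm_apply_apply, mob_mob ha hz]
  · intro w z hw hz
    rw [U.inner_map_map]
    exact mob_formula ha hz hw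
  · intro z hz
    rw [U.norm_map]
    exact mob_norm ha hz

end geom
end BallAux

namespace BallAux
section psd
variable {ι : Type*}

/-- Positive semidefiniteness of a kernel on a finite set. -/
def PSD (s : Finset ι) (k : ι → ι → ℂ) : Prop :=
  ∀ a : ι → ℂ, 0 ≤ (∑ i ∈ s, ∑ j ∈ s, (starRingEnd ℂ) (a i) * a j * k i j).re

lemma PSD.add {s : Finset ι} {k l : ι → ι → ℂ} (hk : PSD s k) (hl : PSD s l) :
    PSD s (fun i j => k i j + l i j) := by
  intro a
  simp only [mul_add, Finset.sum_add_distrib, Complex.add_re]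
  exact add_nonneg (hk a) (hl a)

lemma PSD.smul {s : Finset ι} {k : ι → ι → ℂ} (hk : PSD s k) {c : ℝ} (hc : 0 ≤ c) :
    PSD s (fun i j => (c : ℂ) * k i j) := by
  intro a
  have : ∑ i ∈ s, ∑ j ∈ s, (starRingEnd ℂ) (a i) * a j * ((c : ℂ) * k i j) =
      (c : ℂ) * ∑ i ∈ s, ∑ j ∈ s, (starRingEnd ℂ) (a i) * a j * k i j := by
    simp only [Finset.mul_sum]
    refine Finset.sum_congr rfl fun i _ => Finset.sum_congr rfl fun j _ => by ring
  rw [this, Complex.re_ofReal_mul]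
  exact mul_nonneg hc (hk a)

lemma PSD.one (s : Finset ι) : PSD s (fun _ _ => 1) := by
  intro a
  have : ∑ i ∈ s, ∑ j ∈ s, (starRingEnd ℂ) (a i) * a j * 1 =
      (starRingEnd ℂ) (∑ i ∈ s, a i) * (∑ j ∈ s, a j) := by
    rw [map_sum, Finset.sum_mul_sum]; simp
  rw [this, mul_comm, Complex.mul_conj, Complex.ofReal_re]
  exact Complex.normSq_nonneg _

lemma PSD.zero (s : Finset ι) : PSD s (fun _ _ => 0) := by
  intro a
  simp

lemma PSD.mul_inner {N : ℕ} {s : Finset ι} {k : ι → ι → ℂ} (hk : PSD s k)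
    (u : ι → EuclideanSpace ℂ (Fin N)) : PSD s (fun i j => k i j * ⟪u j, u i⟫) := by
  intro a
  have : ∑ i ∈ s, ∑ j ∈ s, (starRingEnd ℂ) (a i) * a j * (k i j * ⟪u j, u i⟫) =
      ∑ m : Fin N, ∑ i ∈ s, ∑ j ∈ s, (starRingEnd ℂ) (a i * (starRingEnd ℂ) (u i m)) *
        (a j * (starRingEnd ℂ) (u j m)) * k i j := by
    rw [Finset.sum_comm]
    conv_rhs => rw [Finset.sum_comm]
    rw [Finset.sum_comm]
    refine Finset.sum_congr rfl fun i _ => ?_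
    conv_rhs => rw [Finset.sum_comm]
    refine Finset.sum_congr rfl fun j _ => ?_
    rw [PiLp.inner_apply, Finset.mul_sum, Finset.mul_sum]
    refine Finset.sum_congr rfl fun m _ => ?_
    simp
    ring
  rw [this, Complex.re_sum]
  exact Finset.sum_nonneg fun m _ => hk (fun i => a i * (starRingEnd ℂ) (u i m))

lemma PSD.inner_pow {N : ℕ} (s : Finset ι) (u : ι → EuclideanSpace ℂ (Fin N)) (n : ℕ) :
    PSD s (fun i j => ⟪u j, u i⟫ ^ n) := by
  induction n with
  | zero => simpa using PSD.one s
  | succ n ih => simpa [pow_succ] using ih.mul_inner u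

lemma PSD.hasSum {s : Finset ι} {k : ℕ → ι → ι → ℂ} {l : ι → ι → ℂ} (hk : ∀ n, PSD s (k n))
    (hs : ∀ i j, HasSum (fun n => k n i j) (l i j)) : PSD s l := by
  intro a
  have h1 : HasSum (fun n => ∑ i ∈ s, ∑ j ∈ s, (starRingEnd ℂ) (a i) * a j * k n i j)
      (∑ i ∈ s, ∑ j ∈ s, (starRingEnd ℂ) (a i) * a j * l i j) :=
    hasSum_sum fun i _ => hasSum_sum fun j _ => (hs i j).mul_left _
  exact (Complex.hasSum_re h1).nonneg fun n => hk n a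

lemma choose_nonneg {τ : ℝ} (hτ : 0 ≤ τ) (n : ℕ) : 0 ≤ Ring.choose (τ + n - 1) n := by
  have h1 : Ring.choose (τ + n - 1) n = Ring.multichoose τ n := by
    rw [Ring.choose]; congr 1; ring
  rw [h1]
  have h2 := Ring.factorial_nsmul_multichoose_eq_ascPochhammer τ n
  rw [Polynomial.ascPochhammer_smeval_eq_eval] at h2
  have h3 : 0 ≤ (ascPochhammer ℝ n).eval τ := by
    clear h1 h2
    induction n with
    | zero => simp
    | succ n ih => rw [ascPochhammer_succ_eval]; positivity
  rw [← h2, nsmul_eq_mul] at h3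
  exact nonneg_of_mul_nonneg_right h3 (by positivity)

lemma hasSum_cpow (τ : ℝ) {x : ℂ} (hx : ‖x‖ < 1) :
    HasSum (fun n : ℕ => ((Ring.choose (τ + n - 1) n : ℝ) : ℂ) * x ^ n) ((1 - x) ^ (-(τ : ℂ))) := by
  have h := Complex.one_div_one_sub_cpow_hasFPowerSeriesOnBall_zero (τ : ℂ)
  have hx' : x ∈ Metric.eball (0 : ℂ) 1 := by
    rw [Metric.mem_eball, edist_zero_right]
    rw [← ofReal_norm, ENNReal.ofReal_lt_one]
    exact hx
  have h2 := h.hasSum hx'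
  simp only [zero_add, one_div, ← Complex.cpow_neg] at h2
  have h3 : (fun n : ℕ => ((Ring.choose (τ + n - 1) n : ℝ) : ℂ) * x ^ n) = fun n =>
      (FormalMultilinearSeries.ofScalars ℂ (fun n : ℕ => Ring.choose ((τ : ℂ) + n - 1) n) n)
        fun _ => x := by
    funext n
    rw [Complex.ofReal_choose]
    simp [FormalMultilinearSeries.ofScalars]
  rw [h3]
  exact h2

lemma PSD.cpow {N : ℕ} (s : Finset ι) (u : ι → EuclideanSpace ℂ (Fin N)) (hu : ∀ i, ‖u i‖ < 1)
    {τ : ℝ} (hτ : 0 ≤ τ) : PSD s (fun i j => (1 - ⟪u j, u i⟫) ^ (-(τ : ℂ))) := by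
  refine PSD.hasSum (fun n => (PSD.inner_pow s u n).smul (choose_nonneg hτ n)) fun i j => ?_
  apply hasSum_cpow
  exact (norm_inner_lt (hu i).le).trans_lt (hu j)

lemma PSD.mult {N : ℕ} (s : Finset ι) (u : ι → EuclideanSpace ℂ (Fin N)) (hu : ∀ i, ‖u i‖ < 1)
    {t : ℝ} (ht : 1 ≤ t) (η : EuclideanSpace ℂ (Fin N)) :
    PSD s (fun i j => ((‖η‖ ^ 2 : ℝ) - ⟪η, u i⟫ * ⟪u j, η⟫) * (1 - ⟪u j, u i⟫) ^ (-(t : ℂ))) := by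
  rcases eq_or_ne η 0 with rfl | hη
  · simpa using PSD.zero s
  have hη' : ‖η‖ ≠ 0 := norm_ne_zero_iff.mpr hη
  have hηC : (‖η‖ : ℂ) ≠ 0 := by exact_mod_cast hη'
  have hA := (PSD.cpow s u hu (τ := t - 1) (by linarith)).smul (sq_nonneg ‖η‖)
  have hB := ((PSD.cpow s u hu (τ := t) (by linarith)).mul_inner
    (fun i => ((‖η‖ : ℂ) ^ 2) • u i - ⟪η, u i⟫ • η)).smul (c := (‖η‖ ^ 2)⁻¹) (by positivity)
  convert hA.add hB using 3 with i j
  have hne := den_ne (hu j) (hu i).le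
  have h1 : (1 - ⟪u j, u i⟫) ^ (-((t - 1 : ℝ) : ℂ)) =
      (1 - ⟪u j, u i⟫) ^ (-(t : ℂ)) * (1 - ⟪u j, u i⟫) := by
    have : (-((t - 1 : ℝ) : ℂ)) = -(t : ℂ) + 1 := by push_cast; ring
    rw [this, Complex.cpow_add _ _ hne, Complex.cpow_one]
  rw [h1]
  simp only [inner_sub_left, inner_sub_right, inner_smul_left, inner_smul_right,
    inner_self_eq_norm_sq_to_K, inner_conj_symm, map_pow, Complex.conj_ofReal]
  push_cast
  simp only [Complex.coe_algebraMap]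
  field_simp
  ring
end psd
end BallAux

namespace BallAux
section space
variable {N : ℕ} {t : ℝ} (S : BallKernelSpace N t)

lemma mem_Ball {z : EuclideanSpace ℂ (Fin N)} : z ∈ Ball N ↔ ‖z‖ < 1 := by simp

lemma inner_kernel {w v : EuclideanSpace ℂ (Fin N)} (hw : ‖w‖ < 1) (hv : ‖v‖ < 1) :
    ⟪S.kernel w, S.kernel v⟫ = (1 - ⟪v, w⟫) ^ (-(t : ℂ)) := by
  rw [S.reproducing _ w (mem_Ball.mpr hw), S.eval_kernel v (mem_Ball.mpr hv) w (mem_Ball.mpr hw)]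

lemma eval_eq {f : S.H} {z : EuclideanSpace ℂ (Fin N)} (hz : ‖z‖ < 1) :
    S.eval f z = ⟪S.kernel z, f⟫ := (S.reproducing f z (mem_Ball.mpr hz)).symm

lemma kernel_norm_sq {w : EuclideanSpace ℂ (Fin N)} (hw : ‖w‖ < 1) :
    ‖S.kernel w‖ ^ 2 = (1 - ‖w‖ ^ 2) ^ (-t) := by
  have h := inner_kernel S hw hw
  rw [inner_self_eq_norm_sq_to_K, inner_self_eq_norm_sq_to_K] at h
  have h0 : (0 : ℝ) ≤ 1 - ‖w‖ ^ 2 := by nlinarith [norm_nonneg w]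
  have h2 : ((‖S.kernel w‖ ^ 2 : ℝ) : ℂ) = (((1 - ‖w‖ ^ 2) ^ (-t) : ℝ) : ℂ) := by
    rw [Complex.ofReal_cpow h0]
    push_cast
    exact h
  exact_mod_cast h2

lemma kernel_norm_pos {w : EuclideanSpace ℂ (Fin N)} (hw : ‖w‖ < 1) : 0 < ‖S.kernel w‖ := by
  have h := kernel_norm_sq S hw
  have h0 : (0 : ℝ) < 1 - ‖w‖ ^ 2 := by nlinarith [norm_nonneg w]
  have h1 : 0 < ‖S.kernel w‖ ^ 2 := by rw [h]; positivity
  have h3 : ‖S.kernel w‖ ≠ 0 := by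
    intro h4
    rw [h4] at h1
    norm_num at h1
  exact lt_of_le_of_ne (norm_nonneg _) h3.symm

/-- Kernel family as a linear map from finitely supported functions. -/
def kmap : ((Ball N) →₀ ℂ) →ₗ[ℂ] S.H := Finsupp.linearCombination ℂ (fun w => S.kernel w)

lemma dense_kmap : DenseRange (kmap S) := by
  have h : (Submodule.span ℂ (Set.range (fun w : Ball N => S.kernel w)))ᗮ = ⊥ := by
    rw [Submodule.eq_bot_iff]
    intro f hf
    apply S.eval_injective
    intro z hz
    have h1 : ⟪S.kernel z, f⟫ = 0 :=
      (Submodule.mem_orthogonal _ _).mp hf _ (Submodule.subset_span ⟨⟨z, hz⟩, rfl⟩)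
    have h2 : S.eval 0 z = 0 := by
      have := S.reproducing 0 z hz
      simpa using this.symm
    rw [h2, ← h1, S.reproducing f z hz]
  have h2 := (Submodule.topologicalClosure_eq_top_iff
    (K := Submodule.span ℂ (Set.range (fun w : Ball N => S.kernel w)))).mpr h
  have h3 := Submodule.dense_iff_topologicalClosure_eq_top.mpr h2
  rw [DenseRange, ← LinearMap.coe_range, kmap, Finsupp.range_linearCombination]
  exact h3

lemma norm_comb_sq {b : Ball N → ℂ} (s : Finset (Ball N)) :
    ‖∑ i ∈ s, b i • S.kernel i‖ ^ 2 =
      (∑ i ∈ s, ∑ j ∈ s, (starRingEnd ℂ) (b i) * b j *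
        (1 - ⟪(j : EuclideanSpace ℂ (Fin N)), (i : EuclideanSpace ℂ (Fin N))⟫) ^ (-(t : ℂ))).re := by
  rw [← inner_self_eq_norm_sq (𝕜 := ℂ), sum_inner]
  simp only [inner_sum, inner_smul_left, inner_smul_right]
  refine congrArg Complex.re ?_
  refine Finset.sum_congr rfl fun i _ => Finset.sum_congr rfl fun j _ => ?_
  rw [inner_kernel S (mem_Ball.mp i.2) (mem_Ball.mp j.2)]
  ring

lemma exists_mult (ht : 1 ≤ t) (η : EuclideanSpace ℂ (Fin N)) :
    ∃ M : S.H →L[ℂ] S.H, ‖M‖ ≤ ‖η‖ ∧ ∀ f, ∀ z, ‖z‖ < 1 → S.eval (M f) z = ⟪η, z⟫ * S.eval f z := by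
  let fm : ((Ball N) →₀ ℂ) →ₗ[ℂ] S.H :=
    Finsupp.linearCombination ℂ (fun w : Ball N => ⟪(w : EuclideanSpace ℂ (Fin N)), η⟫ • S.kernel w)
  have hb : ∀ l, ‖fm l‖ ≤ ‖η‖ * ‖kmap S l‖ := by
    intro l
    have h1 : fm l = ∑ i ∈ l.support, (l i * ⟪(i : EuclideanSpace ℂ (Fin N)), η⟫) • S.kernel i := by
      simp only [fm, Finsupp.linearCombination_apply, Finsupp.sum, smul_smul]
    have h2 : kmap S l = ∑ i ∈ l.support, l i • S.kernel i := by
      simp only [kmap, Finsupp.linearCombination_apply, Finsupp.sum]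
    have h3 := PSD.mult l.support (fun i : Ball N => (i : EuclideanSpace ℂ (Fin N)))
      (fun i => mem_Ball.mp i.2) ht η (fun i => l i)
    have h4 : ‖fm l‖ ^ 2 ≤ ‖η‖ ^ 2 * ‖kmap S l‖ ^ 2 := by
      rw [h1, h2, norm_comb_sq S l.support (b := fun i => l i * ⟪(i : EuclideanSpace ℂ (Fin N)), η⟫),
        norm_comb_sq S l.support (b := fun i => l i), ← Complex.re_ofReal_mul, ← sub_nonneg,
        ← Complex.sub_re]
      convert h3 using 2
      rw [Finset.mul_sum, ← Finset.sum_sub_distrib]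
      refine Finset.sum_congr rfl fun i _ => ?_
      rw [Finset.mul_sum, ← Finset.sum_sub_distrib]
      refine Finset.sum_congr rfl fun j _ => ?_
      rw [map_mul, inner_conj_symm]
      ring
    rw [← mul_pow] at h4
    exact le_of_sq_le_sq h4 (by positivity)
  let L : S.H →L[ℂ] S.H := fm.extendOfNorm (kmap S)
  have hL : ∀ w : Ball N, L (S.kernel w) = ⟪(w : EuclideanSpace ℂ (Fin N)), η⟫ • S.kernel w := by
    intro w
    have := LinearMap.extendOfNorm_eq (f := fm) (e := kmap S) (dense_kmap S) ⟨_, hb⟩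
      (Finsupp.single w 1)
    have h5 : kmap S (Finsupp.single w 1) = S.kernel w := by simp [kmap]
    have h6 : fm (Finsupp.single w 1) = ⟪(w : EuclideanSpace ℂ (Fin N)), η⟫ • S.kernel w := by
      simp [fm]
    rw [h5, h6] at this
    exact this
  refine ⟨ContinuousLinearMap.adjoint L, ?_, ?_⟩
  · rw [LinearIsometryEquiv.norm_map]
    exact LinearMap.opNorm_extendOfNorm_le (dense_kmap S) (norm_nonneg _) hb
  · intro f z hz
    rw [eval_eq S hz, ContinuousLinearMap.adjoint_inner_right, hL ⟨z, mem_Ball.mpr hz⟩,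
      inner_smul_left, inner_conj_symm, eval_eq S hz]

/-- The multiplication operator by `⟨·, η⟩`. -/
def mulOp (ht : 1 ≤ t) (η : EuclideanSpace ℂ (Fin N)) : S.H →L[ℂ] S.H := (exists_mult S ht η).choose

lemma mulOp_norm (ht : 1 ≤ t) (η : EuclideanSpace ℂ (Fin N)) : ‖mulOp S ht η‖ ≤ ‖η‖ :=
  (exists_mult S ht η).choose_spec.1

lemma mulOp_eval (ht : 1 ≤ t) (η : EuclideanSpace ℂ (Fin N)) (f : S.H)
    {z : EuclideanSpace ℂ (Fin N)} (hz : ‖z‖ < 1) :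
    S.eval (mulOp S ht η f) z = ⟪η, z⟫ * S.eval f z :=
  (exists_mult S ht η).choose_spec.2 f z hz

lemma ext_ball {f g : S.H} (h : ∀ z, ‖z‖ < 1 → S.eval f z = S.eval g z) : f = g :=
  S.eval_injective f g fun z hz => h z (mem_Ball.mp hz)

lemma eval_sub (f g : S.H) {z : EuclideanSpace ℂ (Fin N)} (hz : ‖z‖ < 1) :
    S.eval (f - g) z = S.eval f z - S.eval g z := by
  simp only [eval_eq S hz, inner_sub_right]

lemma mulOp_add (ht : 1 ≤ t) (η θ : EuclideanSpace ℂ (Fin N)) (f : S.H) :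
    mulOp S ht (η + θ) f = mulOp S ht η f + mulOp S ht θ f := by
  apply ext_ball S
  intro z hz
  rw [S.eval_add, mulOp_eval S ht _ _ hz, mulOp_eval S ht _ _ hz, mulOp_eval S ht _ _ hz,
    inner_add_left]
  ring

lemma mulOp_comm (ht : 1 ≤ t) (η θ : EuclideanSpace ℂ (Fin N)) :
    mulOp S ht η * mulOp S ht θ = mulOp S ht θ * mulOp S ht η := by
  ext f
  apply ext_ball S
  intro z hz
  simp only [mul_apply_eq_comp, mulOp_eval S ht _ _ hz]
  ring

lemma mulOp_adjoint_kernel (ht : 1 ≤ t) (η : EuclideanSpace ℂ (Fin N))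
    {w : EuclideanSpace ℂ (Fin N)} (hw : ‖w‖ < 1) :
    ContinuousLinearMap.adjoint (mulOp S ht η) (S.kernel w) = ⟪w, η⟫ • S.kernel w := by
  apply ext_inner_right ℂ
  intro f
  rw [ContinuousLinearMap.adjoint_inner_left, ← eval_eq S hw, mulOp_eval S ht _ _ hw,
    inner_smul_left, inner_conj_symm, eval_eq S hw]

lemma comp_adjoint_kernel {φ : EuclideanSpace ℂ (Fin N) → EuclideanSpace ℂ (Fin N)}
    {T : S.H →L[ℂ] S.H} (hT : S.IsCompositionOperator φ T) {w : EuclideanSpace ℂ (Fin N)}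
    (hw : ‖w‖ < 1) (hφw : ‖φ w‖ < 1) :
    ContinuousLinearMap.adjoint T (S.kernel w) = S.kernel (φ w) := by
  apply ext_inner_right ℂ
  intro f
  rw [ContinuousLinearMap.adjoint_inner_left, ← eval_eq S hw, hT f w (mem_Ball.mpr hw),
    ← eval_eq S hφw]

/-- Key intertwining identity. -/
lemma intertwine (ht : 1 ≤ t) {φ : EuclideanSpace ℂ (Fin N) → EuclideanSpace ℂ (Fin N)}
    {T : S.H →L[ℂ] S.H} (hT : S.IsCompositionOperator φ T) (A : ExtAut φ)
    {η : EuclideanSpace ℂ (Fin N)} (hη : ‖η‖ = 1) :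
    ∃ c : ℂ, c ≠ 0 ∧ (1 - mulOp S ht A.a) * T * (1 - mulOp S ht (A.Φ η)) =
      c • ((1 - mulOp S ht η) * T) := by
  have hd := den_ne' A.ha hη.le
  have h1 : (1 - ‖A.a‖ ^ 2 : ℝ) ≠ 0 := by
    have := A.ha
    nlinarith [norm_nonneg A.a]
  refine ⟨((1 - ‖A.a‖ ^ 2 : ℝ) : ℂ) / (1 - ⟪η, A.a⟫), div_ne_zero (by exact_mod_cast h1) hd, ?_⟩
  ext f
  apply ext_ball S
  intro z hz
  have hφz : ‖φ z‖ < 1 := by rw [A.eq z hz]; exact A.ball z hz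
  simp only [mul_apply_eq_comp, sub_apply,
    one_apply_eq_self, smul_apply]
  rw [eval_sub S _ _ hz, mulOp_eval S ht _ _ hz, hT _ z (mem_Ball.mpr hz), eval_sub S _ _ hφz,
    mulOp_eval S ht _ _ hφz, S.eval_smul, eval_sub S _ _ hz, mulOp_eval S ht _ _ hz,
    hT _ z (mem_Ball.mpr hz), A.eq z hz]
  have h2 := A.formula η z hη.le hz.le
  have h3 : (1 - ⟪A.Φ η, A.Φ z⟫) * (1 - ⟪A.a, z⟫) =
      ((1 - ‖A.a‖ ^ 2 : ℝ) : ℂ) / (1 - ⟪η, A.a⟫) * (1 - ⟪η, z⟫) := by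
    rw [div_mul_eq_mul_div, eq_div_iff hd, ← h2]; ring
  linear_combination (S.eval f (A.Φ z)) * h3

/-- Comparison of kernel norms under an automorphism. -/
lemma kernel_compare (ht : 1 ≤ t) {φ : EuclideanSpace ℂ (Fin N) → EuclideanSpace ℂ (Fin N)}
    (A : ExtAut φ) : ∃ C : ℝ, 0 < C ∧ ∀ w, ‖w‖ < 1 → ‖S.kernel w‖ ≤ C * ‖S.kernel (A.Φ w)‖ := by
  have ha := A.ha
  set D : ℝ := (1 - ‖A.a‖ ^ 2) / (1 - ‖A.a‖) ^ 2 with hD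
  have hDpos : 0 < D := by
    apply div_pos
    · nlinarith [norm_nonneg A.a]
    · have : 0 < 1 - ‖A.a‖ := by linarith
      positivity
  refine ⟨Real.sqrt (D ^ t), Real.sqrt_pos.mpr (by positivity), fun w hw => ?_⟩
  have h1 := A.normf w hw.le
  have hA := A.ball w hw
  have hp1 : 0 < 1 - ‖w‖ ^ 2 := by nlinarith [norm_nonneg w]
  have hp2 : 0 < 1 - ‖A.Φ w‖ ^ 2 := by nlinarith [norm_nonneg (A.Φ w)]
  have h2 : 1 - ‖A.a‖ ≤ ‖1 - ⟪A.a, w⟫‖ := by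
    have h3 := norm_sub_norm_le (1 : ℂ) ⟪A.a, w⟫
    have h4 := norm_inner_lt (a := A.a) hw.le
    simp only [norm_one] at h3
    linarith
  have h3 : (1 - ‖A.Φ w‖ ^ 2) ≤ D * (1 - ‖w‖ ^ 2) := by
    have h0 : 0 < 1 - ‖A.a‖ := by linarith
    rw [hD, div_mul_eq_mul_div, le_div_iff₀ (by positivity), ← h1]
    gcongr
  have h4 : (D * (1 - ‖w‖ ^ 2)) ^ (-t) ≤ (1 - ‖A.Φ w‖ ^ 2) ^ (-t) :=
    Real.rpow_le_rpow_of_nonpos hp2 h3 (by linarith)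
  rw [Real.mul_rpow hDpos.le hp1.le, ← kernel_norm_sq S hw, ← kernel_norm_sq S hA,
    Real.rpow_neg hDpos.le] at h4
  have hDt : 0 < D ^ t := by positivity
  rw [inv_mul_le_iff₀ hDt] at h4
  apply le_of_sq_le_sq _ (by positivity)
  rw [mul_pow, Real.sq_sqrt hDt.le]
  exact h4

end space
end BallAux

namespace BallAux
section final

section hilbert
variable {H : Type*} [NormedAddCommGroup H] [InnerProductSpace ℂ H] [CompleteSpace H]

lemma contr {L : H →L[ℂ] H} (hL : ‖L‖ ≤ 1) (x : H) :
    ‖x - L x‖ ^ 2 ≤ 2 * (‖x‖ * ‖x - ContinuousLinearMap.adjoint L x‖) := by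
  have h1 := norm_sub_sq (𝕜 := ℂ) x (L x)
  have h2 : ‖L x‖ ≤ ‖x‖ := by
    calc ‖L x‖ ≤ ‖L‖ * ‖x‖ := L.le_opNorm x
      _ ≤ 1 * ‖x‖ := by gcongr
      _ = ‖x‖ := one_mul _
  have h3 : ‖L x‖ ^ 2 ≤ ‖x‖ ^ 2 := by gcongr
  have h4 : RCLike.re ⟪x - ContinuousLinearMap.adjoint L x, x⟫ ≤
      ‖x - ContinuousLinearMap.adjoint L x‖ * ‖x‖ := re_inner_le_norm _ _
  rw [inner_sub_left, map_sub, inner_self_eq_norm_sq, ContinuousLinearMap.adjoint_inner_left] at h4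
  nlinarith

lemma contr_tendsto {L : H →L[ℂ] H} (hL : ‖L‖ ≤ 1) {x : ℕ → H} {C : ℝ} (hx : ∀ n, ‖x n‖ ≤ C)
    (h : Tendsto (fun n => x n - ContinuousLinearMap.adjoint L (x n)) atTop (𝓝 0)) :
    Tendsto (fun n => x n - L (x n)) atTop (𝓝 0) := by
  have h1 : Tendsto (fun n => Real.sqrt (2 * (C * ‖x n - ContinuousLinearMap.adjoint L (x n)‖)))
      atTop (𝓝 0) := by
    have := ((h.norm.const_mul C).const_mul 2).sqrt
    simpa using this
  apply squeeze_zero_norm _ h1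
  intro n
  apply Real.le_sqrt_of_sq_le
  refine (contr hL (x n)).trans ?_
  gcongr
  exact hx n

lemma contr_tendsto' {L : H →L[ℂ] H} (hL : ‖L‖ ≤ 1) {x : ℕ → H} {C : ℝ} (hx : ∀ n, ‖x n‖ ≤ C)
    (h : Tendsto (fun n => x n - L (x n)) atTop (𝓝 0)) :
    Tendsto (fun n => x n - ContinuousLinearMap.adjoint L (x n)) atTop (𝓝 0) := by
  apply contr_tendsto (C := C) _ hx
  · simpa using h
  · rwa [LinearIsometryEquiv.norm_map]

lemma compact_tendsto {T : H →L[ℂ] H} (hT : IsCompactOperator T) {x : ℕ → H} {C : ℝ}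
    (hx : ∀ n, ‖x n‖ ≤ C) (hw : ∀ f, Tendsto (fun n => ⟪x n, f⟫) atTop (𝓝 0)) :
    Tendsto (fun n => T (x n)) atTop (𝓝 0) := by
  apply tendsto_of_subseq_tendsto
  intro ns hns
  obtain ⟨K, hK, hK2⟩ := IsCompactOperator.image_closedBall_subset_compact (f := (T : H →ₗ[ℂ] H)) hT C
  have hmem : ∀ n, T (x (ns n)) ∈ K := fun n => hK2 ⟨x (ns n), by simpa using hx _, rfl⟩
  obtain ⟨a, -, ms, hms, hlim⟩ := hK.tendsto_subseq hmem
  refine ⟨ms, ?_⟩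
  have ha : a = 0 := by
    have h1 : Tendsto (fun n => ⟪T (x (ns (ms n))), a⟫) atTop (𝓝 ⟪a, a⟫) :=
      Filter.Tendsto.inner hlim tendsto_const_nhds
    have h2 : Tendsto (fun n => ⟪T (x (ns (ms n))), a⟫) atTop (𝓝 0) := by
      have := (hw (ContinuousLinearMap.adjoint T a)).comp (hns.comp hms.tendsto_atTop)
      refine this.congr fun n => ?_
      simp [ContinuousLinearMap.adjoint_inner_right]
    exact inner_self_eq_zero.mp (tendsto_nhds_unique h1 h2)
  rw [← ha]
  exact hlim

end hilbert

variable {N : ℕ} {t : ℝ} (S : BallKernelSpace N t)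

lemma inv_kernel_tendsto (ht : 1 ≤ t) {w : ℕ → EuclideanSpace ℂ (Fin N)} {ζ : EuclideanSpace ℂ (Fin N)}
    (hw : ∀ n, ‖w n‖ < 1) (hζ : ‖ζ‖ = 1) (hl : Tendsto w atTop (𝓝 ζ)) :
    Tendsto (fun n => ‖S.kernel (w n)‖⁻¹) atTop (𝓝 0) := by
  have h1 : Tendsto (fun n => Real.sqrt ((1 - ‖w n‖ ^ 2) ^ t)) atTop (𝓝 0) := by
    have h2 : Tendsto (fun n => 1 - ‖w n‖ ^ 2) atTop (𝓝 0) := by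
      have := (hl.norm.pow 2).const_sub 1
      simpa [hζ] using this
    have h3 := (h2.rpow_const (p := t) (Or.inr (by linarith))).sqrt
    simpa [Real.zero_rpow (by linarith : t ≠ 0)] using h3
  refine h1.congr fun n => ?_
  have h0 : (0 : ℝ) ≤ 1 - ‖w n‖ ^ 2 := by nlinarith [norm_nonneg (w n), hw n]
  rw [Real.sqrt_eq_iff_mul_self_eq (by positivity) (by positivity), ← sq, inv_pow,
    kernel_norm_sq S (hw n), Real.rpow_neg h0, inv_inv]

lemma weak_null (ht : 1 ≤ t) {w : ℕ → EuclideanSpace ℂ (Fin N)} {ζ : EuclideanSpace ℂ (Fin N)}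
    (hw : ∀ n, ‖w n‖ < 1) (hζ : ‖ζ‖ = 1) (hl : Tendsto w atTop (𝓝 ζ)) (f : S.H) :
    Tendsto (fun n => ⟪((‖S.kernel (w n)‖⁻¹ : ℝ) : ℂ) • S.kernel (w n), f⟫) atTop (𝓝 0) := by
  have hk : ∀ n, ‖((‖S.kernel (w n)‖⁻¹ : ℝ) : ℂ) • S.kernel (w n)‖ = 1 := by
    intro n
    rw [norm_smul, Complex.norm_real, norm_inv, norm_norm]
    exact inv_mul_cancel₀ (kernel_norm_pos S (hw n)).ne'
  have hinv := inv_kernel_tendsto S ht hw hζ hl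
  set k : ℕ → S.H := fun n => ((‖S.kernel (w n)‖⁻¹ : ℝ) : ℂ) • S.kernel (w n) with hkdef
  have hker : ∀ v : Ball N, Tendsto (fun n => ⟪k n, S.kernel v⟫) atTop (𝓝 0) := by
    intro v
    have hv : ‖(v : EuclideanSpace ℂ (Fin N))‖ < 1 := mem_Ball.mp v.2
    have h1 : Tendsto (fun n => (1 - ⟪(v : EuclideanSpace ℂ (Fin N)), w n⟫) ^ (-(t : ℂ))) atTop
        (𝓝 ((1 - ⟪(v : EuclideanSpace ℂ (Fin N)), ζ⟫) ^ (-(t : ℂ)))) := by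
      have h2 : Tendsto (fun n => 1 - ⟪(v : EuclideanSpace ℂ (Fin N)), w n⟫) atTop
          (𝓝 (1 - ⟪(v : EuclideanSpace ℂ (Fin N)), ζ⟫)) :=
        (Filter.Tendsto.inner tendsto_const_nhds hl).const_sub 1
      apply h2.cpow tendsto_const_nhds
      left
      have h3 : ‖⟪(v : EuclideanSpace ℂ (Fin N)), ζ⟫‖ ≤ ‖(v : EuclideanSpace ℂ (Fin N))‖ * ‖ζ‖ :=
        norm_inner_le_norm _ _
      have h4 := Complex.re_le_norm ⟪(v : EuclideanSpace ℂ (Fin N)), ζ⟫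
      rw [hζ, mul_one] at h3
      rw [Complex.sub_re, Complex.one_re]
      linarith
    have h5 : Tendsto (fun n => ((‖S.kernel (w n)‖⁻¹ : ℝ) : ℂ)) atTop (𝓝 0) := by
      have := (Complex.continuous_ofReal.tendsto 0).comp hinv
      rw [Complex.ofReal_zero] at this
      exact this
    have h6 := h5.mul h1
    rw [zero_mul] at h6
    refine h6.congr fun n => ?_
    rw [hkdef]
    simp only [inner_smul_left, inner_kernel S (hw n) hv, Complex.conj_ofReal]
  have hspan : ∀ l, Tendsto (fun n => ⟪k n, kmap S l⟫) atTop (𝓝 0) := by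
    intro l
    simp only [kmap, Finsupp.linearCombination_apply, Finsupp.sum, inner_sum, inner_smul_right]
    have := tendsto_finsetSum l.support (fun i _ => (hker i).const_mul (l i))
    simpa using this
  rw [Metric.tendsto_atTop]
  intro ε hε
  obtain ⟨_, ⟨l, rfl⟩, hl2⟩ := Metric.mem_closure_iff.mp (dense_kmap S f) (ε / 2) (by positivity)
  obtain ⟨n0, hn0⟩ := Metric.tendsto_atTop.mp (hspan l) (ε / 2) (by positivity)
  refine ⟨n0, fun n hn => ?_⟩
  have h1 := hn0 n hn
  rw [dist_zero_right] at h1 ⊢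
  have h2 : ⟪k n, f⟫ = ⟪k n, f - kmap S l⟫ + ⟪k n, kmap S l⟫ := by
    rw [← inner_add_right, sub_add_cancel]
  have h3 : ‖⟪k n, f - kmap S l⟫‖ ≤ ‖k n‖ * ‖f - kmap S l‖ := norm_inner_le_norm _ _
  rw [hk n, one_mul, ← dist_eq_norm] at h3
  change ‖⟪k n, f⟫‖ < ε
  rw [h2]
  linarith [norm_add_le ⟪k n, f - kmap S l⟫ ⟪k n, kmap S l⟫]

lemma exists_seq {ζ : EuclideanSpace ℂ (Fin N)} (hζ : ‖ζ‖ = 1) :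
    ∃ w : ℕ → EuclideanSpace ℂ (Fin N), (∀ n, ‖w n‖ < 1) ∧ Tendsto w atTop (𝓝 ζ) := by
  have h : ζ ∈ closure (ball (0 : EuclideanSpace ℂ (Fin N)) 1) := by
    rw [closure_ball _ one_ne_zero]
    simp [hζ]
  obtain ⟨w, hw, hl⟩ := mem_closure_iff_seq_limit.mp h
  exact ⟨w, fun n => by simpa using hw n, hl⟩

/-- normalized kernels are asymptotic eigenvectors -/
lemma asym_eigen (ht : 1 ≤ t) {v : ℕ → EuclideanSpace ℂ (Fin N)} {ζ : EuclideanSpace ℂ (Fin N)}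
    (hv : ∀ n, ‖v n‖ < 1) (hζ : ‖ζ‖ = 1) (hl : Tendsto v atTop (𝓝 ζ)) (c : ℕ → ℂ) {C : ℝ}
    (hC : ∀ n, ‖c n • S.kernel (v n)‖ ≤ C) :
    Tendsto (fun n => c n • S.kernel (v n) - mulOp S ht ζ (c n • S.kernel (v n))) atTop (𝓝 0) := by
  apply contr_tendsto ((mulOp_norm S ht ζ).trans hζ.le) hC
  have h1 : Tendsto (fun n => ‖1 - ⟪v n, ζ⟫‖ * C) atTop (𝓝 0) := by
    have h2 : Tendsto (fun n => 1 - ⟪v n, ζ⟫) atTop (𝓝 (1 - ⟪ζ, ζ⟫)) :=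
      (Filter.Tendsto.inner hl tendsto_const_nhds).const_sub 1
    have h3 : (1 : ℂ) - ⟪ζ, ζ⟫ = 0 := by
      rw [inner_self_eq_norm_sq_to_K, hζ]; simp
    rw [h3] at h2
    simpa using h2.norm.mul_const C
  apply squeeze_zero_norm _ h1
  intro n
  have : c n • S.kernel (v n) - ContinuousLinearMap.adjoint (mulOp S ht ζ) (c n • S.kernel (v n)) =
      (1 - ⟪v n, ζ⟫) • (c n • S.kernel (v n)) := by
    rw [map_smul, mulOp_adjoint_kernel S ht ζ (hv n), sub_smul, one_smul, smul_comm]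
  rw [this, norm_smul]
  gcongr
  exact hC n

lemma side1 (ht : 1 ≤ t) {φ : EuclideanSpace ℂ (Fin N) → EuclideanSpace ℂ (Fin N)}
    {T : S.H →L[ℂ] S.H} (hT : S.IsCompositionOperator φ T) (A : ExtAut φ)
    {η : EuclideanSpace ℂ (Fin N)} (hη : ‖η‖ = 1) {x : ℕ → S.H}
    (h : Tendsto (fun n => x n - mulOp S ht (A.Φ η) (x n)) atTop (𝓝 0)) :
    Tendsto (fun n => T (x n) - mulOp S ht η (T (x n))) atTop (𝓝 0) := by
  obtain ⟨c, hc, he⟩ := intertwine S ht hT A hη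
  have h1 := ((c⁻¹ • ((1 - mulOp S ht A.a) * T)).continuous.tendsto 0).comp h
  rw [map_zero] at h1
  refine h1.congr fun n => ?_
  have h2 := congrArg (fun L => c⁻¹ • L (x n)) he
  simp only [mul_apply_eq_comp, sub_apply, one_apply_eq_self, smul_apply, smul_smul,
    inv_mul_cancel₀ hc, one_smul] at h2
  rw [← h2]
  simp only [Function.comp, mul_apply_eq_comp, sub_apply, one_apply_eq_self, smul_apply]

lemma side2 (ht : 1 ≤ t) {φ : EuclideanSpace ℂ (Fin N) → EuclideanSpace ℂ (Fin N)}
    {T : S.H →L[ℂ] S.H} (hT : S.IsCompositionOperator φ T) (A : ExtAut φ)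
    {η : EuclideanSpace ℂ (Fin N)} (hη : ‖η‖ = 1) {x : ℕ → S.H} {C : ℝ} (hC : ∀ n, ‖x n‖ ≤ C)
    (h : Tendsto (fun n => x n - mulOp S ht η (x n)) atTop (𝓝 0)) :
    Tendsto (fun n => ContinuousLinearMap.adjoint T (x n) -
      mulOp S ht (A.Φ η) (ContinuousLinearMap.adjoint T (x n))) atTop (𝓝 0) := by
  have h0 := contr_tendsto' ((mulOp_norm S ht η).trans hη.le) hC h
  apply contr_tendsto (C := ‖ContinuousLinearMap.adjoint T‖ * C)
    ((mulOp_norm S ht _).trans (A.sph η hη).le)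
  · intro n
    exact ((ContinuousLinearMap.adjoint T).le_opNorm _).trans (by gcongr; exact hC n)
  obtain ⟨c, hc, he⟩ := intertwine S ht hT A hη
  have hu : IsUnit (1 - star (mulOp S ht A.a)) := by
    apply isUnit_one_sub_of_norm_lt_one
    rw [norm_star]
    exact (mulOp_norm S ht _).trans_lt A.ha
  obtain ⟨R, hR1, hR2⟩ := isUnit_iff_exists.mp hu
  have hcomm : (1 - star (mulOp S ht η)) * R = R * (1 - star (mulOp S ht η)) := by
    have h3 : (1 - star (mulOp S ht A.a)) * (1 - star (mulOp S ht η)) =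
        (1 - star (mulOp S ht η)) * (1 - star (mulOp S ht A.a)) := by
      have h4 := congrArg star (mulOp_comm S ht A.a η)
      rw [star_mul, star_mul] at h4
      simp only [sub_mul, mul_sub, one_mul, mul_one, h4]
      abel
    calc (1 - star (mulOp S ht η)) * R = R * (1 - star (mulOp S ht A.a)) *
          ((1 - star (mulOp S ht η)) * R) := by rw [hR2, one_mul]
      _ = R * ((1 - star (mulOp S ht A.a)) * (1 - star (mulOp S ht η))) * R := by
          simp only [mul_assoc]
      _ = R * (1 - star (mulOp S ht η)) * ((1 - star (mulOp S ht A.a)) * R) := by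
          rw [h3]; simp only [mul_assoc]
      _ = _ := by rw [hR1, mul_one]
  have key : (1 - star (mulOp S ht (A.Φ η))) * star T =
      (star c • (star T * R)) * (1 - star (mulOp S ht η)) := by
    have h5 := congrArg star he
    simp only [star_mul, star_sub, star_one, star_smul] at h5
    calc (1 - star (mulOp S ht (A.Φ η))) * star T =
        ((1 - star (mulOp S ht (A.Φ η))) * (star T * (1 - star (mulOp S ht A.a)))) * R := by
          rw [mul_assoc, mul_assoc, hR1, mul_one]
      _ = (star c • (star T * (1 - star (mulOp S ht η)))) * R := by rw [h5]
      _ = _ := by rw [smul_mul_assoc, smul_mul_assoc, mul_assoc, mul_assoc, hcomm]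
  have h1 := ((star c • (star T * R)).continuous.tendsto 0).comp h0
  rw [map_zero] at h1
  refine h1.congr fun n => ?_
  have h2 := congrArg (fun L => L (x n)) key
  simp only [ContinuousLinearMap.star_eq_adjoint] at h2
  exact h2.symm

lemma boundary_commute (ht : 1 ≤ t) {φ ψ : EuclideanSpace ℂ (Fin N) → EuclideanSpace ℂ (Fin N)}
    {Cφ Cψ : S.H →L[ℂ] S.H} (hCφ : S.IsCompositionOperator φ Cφ)
    (hCψ : S.IsCompositionOperator ψ Cψ) (A : ExtAut φ) (B : ExtAut ψ)
    (hcpt : IsCompactOperator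
      ⇑((ContinuousLinearMap.adjoint Cψ).comp Cφ - Cφ.comp (ContinuousLinearMap.adjoint Cψ)))
    {ζ : EuclideanSpace ℂ (Fin N)} (hζ : ‖ζ‖ = 1) : B.Φ (A.Φ' ζ) = A.Φ' (B.Φ ζ) := by
  by_contra hne
  obtain ⟨w, hw, hl⟩ := exists_seq hζ
  have hBζ := B.sph ζ hζ
  have hη := A.sph' ζ hζ
  have hθ1 := B.sph _ hη
  have hθ2 := A.sph' _ hBζ
  set c : ℕ → ℂ := fun n => ((‖S.kernel (w n)‖⁻¹ : ℝ) : ℂ) with hc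
  set k : ℕ → S.H := fun n => c n • S.kernel (w n) with hkdef
  have hk : ∀ n, ‖k n‖ ≤ 1 := by
    intro n
    rw [hkdef, hc]
    simp only [norm_smul, Complex.norm_real, norm_inv, norm_norm]
    exact (inv_mul_cancel₀ (kernel_norm_pos S (hw n)).ne').le
  have hcomm0 := compact_tendsto hcpt hk (weak_null S ht hw hζ hl)
  have hψ : ∀ n, ψ (w n) = B.Φ (w n) := fun n => B.eq _ (hw n)
  have hv : ∀ n, ‖B.Φ (w n)‖ < 1 := fun n => B.ball _ (hw n)
  have hk' : ∀ n, ContinuousLinearMap.adjoint Cψ (k n) = c n • S.kernel (B.Φ (w n)) := by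
    intro n
    rw [hkdef]
    simp only [map_smul]
    rw [comp_adjoint_kernel S hCψ (hw n) (by rw [hψ]; exact hv n), hψ]
  have hvl : Tendsto (fun n => B.Φ (w n)) atTop (𝓝 (B.Φ ζ)) := by
    have h1 := B.cont ζ (by simp [hζ])
    exact h1.tendsto.comp (tendsto_nhdsWithin_iff.mpr ⟨hl, Eventually.of_forall fun n => by
      simpa using (hw n).le⟩)
  -- first side
  have s1 : Tendsto (fun n => Cφ (ContinuousLinearMap.adjoint Cψ (k n)) -
      mulOp S ht (A.Φ' (B.Φ ζ)) (Cφ (ContinuousLinearMap.adjoint Cψ (k n)))) atTop (𝓝 0) := by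
    apply side1 S ht hCφ A hθ2
    rw [A.right_inv _ hBζ.le]
    simp only [hk']
    apply asym_eigen S ht hv hBζ hvl c (C := ‖ContinuousLinearMap.adjoint Cψ‖ * 1)
    intro n
    rw [← hk']
    exact ((ContinuousLinearMap.adjoint Cψ).le_opNorm _).trans (by gcongr; exact hk n)
  -- second side
  have s2 : Tendsto (fun n => ContinuousLinearMap.adjoint Cψ (Cφ (k n)) -
      mulOp S ht (B.Φ (A.Φ' ζ)) (ContinuousLinearMap.adjoint Cψ (Cφ (k n)))) atTop (𝓝 0) := by
    apply side2 S ht hCψ B hη (C := ‖Cφ‖ * 1)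
    · intro n
      exact (Cφ.le_opNorm _).trans (by gcongr; exact hk n)
    · apply side1 S ht hCφ A hη
      rw [A.right_inv _ hζ.le]
      exact asym_eigen S ht hw hζ hl c hk
  set y : ℕ → S.H := fun n => Cφ (ContinuousLinearMap.adjoint Cψ (k n)) with hy
  have s3 : Tendsto (fun n => y n - mulOp S ht (B.Φ (A.Φ' ζ)) (y n)) atTop (𝓝 0) := by
    have h1 := ((1 - mulOp S ht (B.Φ (A.Φ' ζ))).continuous.tendsto 0).comp hcomm0
    rw [map_zero] at h1
    have h2 := s2.sub h1
    rw [sub_zero] at h2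
    refine h2.congr fun n => ?_
    simp only [Function.comp, sub_apply, one_apply_eq_self, ContinuousLinearMap.comp_apply, map_sub,
      hy, hkdef, hc]
    abel
  set θ := B.Φ (A.Φ' ζ) + A.Φ' (B.Φ ζ) with hθ
  have hθn : ‖θ‖ < 2 := by
    have h1 := parallelogram_law_with_norm ℂ (B.Φ (A.Φ' ζ)) (A.Φ' (B.Φ ζ))
    have h2 : 0 < ‖B.Φ (A.Φ' ζ) - A.Φ' (B.Φ ζ)‖ := norm_pos_iff.mpr (sub_ne_zero.mpr hne)
    rw [hθ1, hθ2, ← hθ] at h1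
    nlinarith [norm_nonneg θ]
  have s4 : Tendsto (fun n => (y n - mulOp S ht (B.Φ (A.Φ' ζ)) (y n)) +
      (y n - mulOp S ht (A.Φ' (B.Φ ζ)) (y n))) atTop (𝓝 0) := by
    simpa using s3.add s1
  have hy0 : Tendsto y atTop (𝓝 0) := by
    have h1 := s4.norm.const_mul (2 - ‖θ‖)⁻¹
    rw [norm_zero, mul_zero] at h1
    apply squeeze_zero_norm _ h1
    intro n
    rw [← div_eq_inv_mul, le_div_iff₀ (by linarith)]
    have h2 : (y n - mulOp S ht (B.Φ (A.Φ' ζ)) (y n)) + (y n - mulOp S ht (A.Φ' (B.Φ ζ)) (y n)) =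
        (2 : ℂ) • y n - mulOp S ht θ (y n) := by
      rw [hθ, mulOp_add, two_smul]; abel
    rw [h2]
    have h3 := norm_sub_norm_le ((2 : ℂ) • y n) (mulOp S ht θ (y n))
    have h4 : ‖mulOp S ht θ (y n)‖ ≤ ‖θ‖ * ‖y n‖ :=
      ((mulOp S ht θ).le_opNorm _).trans (by gcongr; exact mulOp_norm S ht θ)
    rw [norm_smul] at h3
    norm_num at h3
    nlinarith
  obtain ⟨D, hD, hDk⟩ := kernel_compare S ht A
  obtain ⟨D', hD', hDk'⟩ := kernel_compare S ht B
  have hlow : ∀ n, 1 ≤ D * D' * ‖y n‖ := by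
    intro n
    have hu := A.ball' _ (hv n)
    set u := A.Φ' (B.Φ (w n)) with hudef
    have hAu : A.Φ u = B.Φ (w n) := A.right_inv _ (hv n).le
    have h1 : S.eval (y n) u = c n * ((‖S.kernel (B.Φ (w n))‖ : ℂ) ^ 2) := by
      rw [hy]
      simp only [hk']
      rw [hCφ _ u (mem_Ball.mpr hu), A.eq u hu, hAu, S.eval_smul, eval_eq S (hv n),
        inner_self_eq_norm_sq_to_K]
      rfl
    have h2 : ‖S.eval (y n) u‖ ≤ ‖S.kernel u‖ * ‖y n‖ := by
      rw [eval_eq S hu]; exact norm_inner_le_norm _ _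
    rw [h1, norm_mul, norm_pow, hc] at h2
    simp only [Complex.norm_real, norm_inv, norm_norm] at h2
    have h3 := hDk u hu
    rw [hAu] at h3
    have h4 := hDk' (w n) (hw n)
    have p1 := kernel_norm_pos S (hw n)
    have p2 := kernel_norm_pos S (hv n)
    set α := ‖S.kernel (B.Φ (w n))‖
    set β := ‖S.kernel (w n)‖
    rw [inv_mul_le_iff₀ p1] at h2
    have h5 : α ^ 2 ≤ α ^ 2 * (D * D' * ‖y n‖) :=
      calc α ^ 2 ≤ β * (‖S.kernel u‖ * ‖y n‖) := h2
        _ ≤ (D' * α) * ((D * α) * ‖y n‖) := by gcongr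
        _ = _ := by ring
    exact le_of_mul_le_mul_left (by simpa using h5) (pow_pos p2 2)
  have h1 := hy0.norm.const_mul (D * D')
  rw [norm_zero, mul_zero] at h1
  have := ge_of_tendsto' h1 hlow
  linarith

lemma main_nontrivial (hN : N ≠ 0) (ht : 1 ≤ t)
    {φ ψ : EuclideanSpace ℂ (Fin N) → EuclideanSpace ℂ (Fin N)}
    (hφ : IsBallAutomorphism N φ) (hψ : IsBallAutomorphism N ψ)
    {Cφ Cψ : S.H →L[ℂ] S.H} (hCφ : S.IsCompositionOperator φ Cφ)
    (hCψ : S.IsCompositionOperator ψ Cψ)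
    (hcpt : IsCompactOperator
      ⇑((ContinuousLinearMap.adjoint Cψ).comp Cφ - Cφ.comp (ContinuousLinearMap.adjoint Cψ))) :
    ∀ z ∈ Ball N, φ (ψ z) = ψ (φ z) := by
  have : NeZero N := ⟨hN⟩
  have : Nontrivial (EuclideanSpace ℂ (Fin N)) := inferInstance
  obtain ⟨hd1, hm1, φ', hd1', hm1', hl1, hr1⟩ := hφ
  obtain ⟨hd2, hm2, ψ', hd2', hm2', hl2, hr2⟩ := hψ
  obtain ⟨A⟩ := exists_extAut hd1 hm1 hd1' hm1' hl1 hr1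
  obtain ⟨B⟩ := exists_extAut hd2 hm2 hd2' hm2' hl2 hr2
  have hcl : closure (Ball N) = closedBall 0 1 := closure_ball _ one_ne_zero
  have hmA : MapsTo A.Φ (closedBall 0 1) (closedBall 0 1) := by
    intro z hz
    rw [mem_closedBall_zero_iff] at hz ⊢
    rcases hz.lt_or_eq with h | h
    · exact (A.ball z h).le
    · exact (A.sph z h).le
  have hmB : MapsTo B.Φ (closedBall 0 1) (closedBall 0 1) := by
    intro z hz
    rw [mem_closedBall_zero_iff] at hz ⊢
    rcases hz.lt_or_eq with h | h
    · exact (B.ball z h).le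
    · exact (B.sph z h).le
  have eA : ∀ z ∈ Ball N, φ z = A.Φ z := fun z hz => A.eq z (mem_Ball.mp hz)
  have eB : ∀ z ∈ Ball N, ψ z = B.Φ z := fun z hz => B.eq z (mem_Ball.mp hz)
  have d1 : DiffContOnCl ℂ (A.Φ ∘ B.Φ) (Ball N) := by
    refine ⟨?_, ?_⟩
    · refine (hd1.comp hd2 hm2).congr fun z hz => ?_
      simp only [Function.comp]
      rw [← eB z hz, eA _ (hm2 hz)]
    · rw [hcl]; exact A.cont.comp B.cont hmB
  have d2 : DiffContOnCl ℂ (B.Φ ∘ A.Φ) (Ball N) := by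
    refine ⟨?_, ?_⟩
    · refine (hd2.comp hd1 hm1).congr fun z hz => ?_
      simp only [Function.comp]
      rw [← eA z hz, eB _ (hm1 hz)]
    · rw [hcl]; exact B.cont.comp A.cont hmA
  have hfr : EqOn (A.Φ ∘ B.Φ) (B.Φ ∘ A.Φ) (frontier (Ball N)) := by
    intro z hz
    rw [frontier_ball _ one_ne_zero, mem_sphere_zero_iff_norm] at hz
    have h1 := boundary_commute S ht hCφ hCψ A B hcpt (A.sph z hz)
    rw [A.left_inv z hz.le] at h1
    simp only [Function.comp]
    rw [h1, A.right_inv _ (B.sph _ (A.sph z hz)).le]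
  have hall := Complex.eqOn_of_eqOn_frontier isBounded_ball d1 d2 hfr
  intro z hz
  have h1 := hall hz
  simp only [Function.comp] at h1
  rw [eA _ (hm2 hz), eB _ hz, eA _ hz, h1, ← eA _ hz, eB _ (hm1 hz)]

end final
end BallAux

/-- Let `φ, ψ` be automorphisms of the unit ball `B_N`.  If the commutator
`[C_ψ*, C_φ] = C_ψ* C_φ - C_φ C_ψ*` is compact on the Hardy space `H²(B_N)` (`t = N`) or on
a weighted Bergman space `A²_s(B_N)` (`t = N + s + 1` for some `s > -1`), then
`φ ∘ ψ = ψ ∘ φ`. -/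
theorem commute_of_commutator_compact_ball
    (N : ℕ) (t : ℝ)
    (ht : t = N ∨ ∃ s : ℝ, -1 < s ∧ t = N + s + 1)
    (S : BallKernelSpace N t)
    (φ ψ : EuclideanSpace ℂ (Fin N) → EuclideanSpace ℂ (Fin N))
    (hφ : IsBallAutomorphism N φ) (hψ : IsBallAutomorphism N ψ)
    (Cφ Cψ : S.H →L[ℂ] S.H)
    (hCφ : S.IsCompositionOperator φ Cφ) (hCψ : S.IsCompositionOperator ψ Cψ)
    (hcpt : IsCompactOperator
      ⇑((ContinuousLinearMap.adjoint Cψ).comp Cφ - Cφ.comp (ContinuousLinearMap.adjoint Cψ))) :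
    ∀ z ∈ Ball N, φ (ψ z) = ψ (φ z) := by
  rcases Nat.eq_zero_or_pos N with hN | hN
  · subst hN
    intro z _
    exact Subsingleton.elim _ _
  · have h1 : (1 : ℝ) ≤ N := by exact_mod_cast hN
    have ht1 : 1 ≤ t := by
      rcases ht with h | ⟨s, hs, h⟩
      · rw [h]; exact h1
      · rw [h]; linarith
    exact BallAux.main_nontrivial S hN.ne' ht1 hφ hψ hCφ hCψ hcpt
end
end
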